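/- arXiv:1902.05686 — 8 statements merged into one kernel-verified Lean document; each statement's English description precedes it below -/
import Mathlib

section
/- Let (M, ρ, μ) be a metric measure space satisfying the doubling condition, the strong homogeneity property with exponent n, and the comparability property with exponent n' ∈ [0, n]. Then for any σ > n + n'/2 there exists a constant C > 0 such that ∫_M D_{t,σ}(x,y) dμ(y) ≤ C uniformly for all t > 0 and x ∈ M. -/
/-!
Comparability lets `μ(B(y,t))` be replaced by `μ(B(x,t))` at the cost of a factor
`(1 + ρ(x,y)/t)^{n'/2}`, so that `D_{t,σ}(x,y) ≤ √C₁ μ(B(x,t))⁻¹ (1 + ρ(x,y)/t)^{-s}` with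
`s = σ - n'/2 > n`. On the dyadic shell `2^k ≤ 1 + ρ(x,y)/t < 2^{k+1}` the last factor is at most
`2^{-ks}`, while strong homogeneity bounds the measure of the shell by `C₀ 2^{(k+1)n} μ(B(x,t))`.
Summing over `k` gives a geometric series of ratio `2^{n-s} < 1`, uniformly in `t` and `x`.
-/

open MeasureTheory Metric

/-- The kernel `D_{t,σ}(x,y) := (μ(B(x,t)) μ(B(y,t)))^{-1/2} (1 + ρ(x,y)/t)^{-σ}`. -/
noncomputable def Dker {M : Type*} [MetricSpace M] [MeasurableSpace M] (μ : Measure M)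
    (t σ : ℝ) (x y : M) : ℝ :=
  ((μ (ball x t)).toReal * (μ (ball y t)).toReal) ^ (-(1 / 2 : ℝ)) *
    (1 + dist x y / t) ^ (-σ)

open scoped ENNReal

lemma tsum_ofReal_geometric {r : ℝ} (hr₀ : 0 ≤ r) (hr₁ : r < 1) :
    ∑' k : ℕ, ENNReal.ofReal (r ^ k) = ENNReal.ofReal (1 - r)⁻¹ := by
  rw [← ENNReal.ofReal_tsum_of_nonneg (fun k => pow_nonneg hr₀ k)
    (summable_geometric_of_lt_one hr₀ hr₁), tsum_geometric_of_lt_one hr₀ hr₁]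

lemma pow_rpow_neg_mul_pow_succ_rpow {b : ℝ} (hb : 0 < b) (n s : ℝ) (k : ℕ) :
    (b ^ k) ^ (-s) * (b ^ (k + 1)) ^ n = b ^ n * (b ^ (n - s)) ^ k := by
  simp only [← Real.rpow_natCast, ← Real.rpow_mul hb.le, ← Real.rpow_add hb]
  congr 1
  push_cast
  ring

lemma rpow_sub_lt_one {b n s : ℝ} (hb : 1 < b) (hns : n < s) : b ^ (n - s) < 1 :=
  Real.rpow_lt_one_of_one_lt_of_neg hb (sub_neg.2 hns)

lemma rpow_mul_inv_one_sub_rpow_pos {b n s : ℝ} (hb : 1 < b) (hns : n < s) :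
    0 < b ^ n * (1 - b ^ (n - s))⁻¹ :=
  mul_pos (Real.rpow_pos_of_pos (one_pos.trans hb) n)
    (inv_pos.2 (sub_pos.2 (rpow_sub_lt_one hb hns)))

lemma mul_rpow_neg_half_le_sqrt_div {v w c : ℝ} (hv : 0 < v) (hc : 0 ≤ c) (h : v ≤ c * w) :
    (v * w) ^ (-(1 / 2 : ℝ)) ≤ √c / v := by
  have hw : 0 < w := pos_of_mul_pos_right (hv.trans_le h) hc
  have hsqrt : v ≤ √c * √(v * w) := by
    rw [← Real.sqrt_mul hc]
    apply Real.le_sqrt_of_sq_le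
    calc v ^ 2 = v * v := sq v
      _ ≤ v * (c * w) := mul_le_mul_of_nonneg_left h hv.le
      _ = c * (v * w) := mul_left_comm _ _ _
  rw [Real.rpow_neg (by positivity), ← Real.sqrt_eq_rpow, inv_eq_one_div,
    div_le_div_iff₀ (by positivity) hv, one_mul]
  exact hsqrt

section SublevelSets

variable {α : Type*} [MeasurableSpace α] {μ : Measure α} {u : α → ℝ}

lemma lintegral_comp_le_tsum_mul_measure_lt_pow {φ : ℝ → ℝ≥0∞} (hφ : AntitoneOn φ (Set.Ici 1))
    (hu : ∀ a, 1 ≤ u a) {b : ℝ} (hb : 1 < b) :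
    ∫⁻ a, φ (u a) ∂μ ≤ ∑' k : ℕ, φ (b ^ k) * μ {a | u a < b ^ (k + 1)} := by
  -- `u` need not be measurable; measurable hulls make the termwise integration legitimate.
  let S : ℕ → Set α := fun k => toMeasurable μ {a | u a < b ^ (k + 1)}
  have hS : ∀ k, MeasurableSet (S k) := fun k => measurableSet_toMeasurable _ _
  have hle : ∀ a, φ (u a) ≤ ∑' k, (S k).indicator (fun _ => φ (b ^ k)) a := by
    intro a
    obtain ⟨k, hk_le, hk_lt⟩ := exists_nat_pow_near (hu a) hb
    have ha : a ∈ S k := subset_toMeasurable _ _ hk_lt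
    calc φ (u a) ≤ φ (b ^ k) := hφ (one_le_pow₀ hb.le) (hu a) hk_le
      _ = (S k).indicator (fun _ => φ (b ^ k)) a := by rw [Set.indicator_of_mem ha]
      _ ≤ _ := ENNReal.le_tsum k
  calc ∫⁻ a, φ (u a) ∂μ
      ≤ ∫⁻ a, ∑' k, (S k).indicator (fun _ => φ (b ^ k)) a ∂μ := lintegral_mono hle
    _ = ∑' k, ∫⁻ a, (S k).indicator (fun _ => φ (b ^ k)) a ∂μ :=
        lintegral_tsum fun k => (measurable_const.indicator (hS k)).aemeasurable
    _ = ∑' k, φ (b ^ k) * μ {a | u a < b ^ (k + 1)} :=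
        tsum_congr fun k => by rw [lintegral_indicator_const (hS k), measure_toMeasurable]

lemma lintegral_rpow_neg_le_of_measure_lt_le {n s : ℝ} {K : ℝ≥0∞} (hs : 0 ≤ s) (hns : n < s)
    (hu : ∀ a, 1 ≤ u a)
    (hμ : ∀ r, 1 ≤ r → μ {a | u a < r} ≤ K * ENNReal.ofReal (r ^ n)) :
    ∫⁻ a, ENNReal.ofReal (u a ^ (-s)) ∂μ ≤
      K * ENNReal.ofReal (2 ^ n * (1 - 2 ^ (n - s))⁻¹) := by
  have hanti : AntitoneOn (fun r : ℝ => ENNReal.ofReal (r ^ (-s))) (Set.Ici 1) :=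
    fun r hr r' _ hrr' => ENNReal.ofReal_le_ofReal <|
      Real.rpow_le_rpow_of_nonpos (one_pos.trans_le hr) hrr' (neg_nonpos.2 hs)
  have hterm : ∀ k : ℕ,
      ENNReal.ofReal (((2 : ℝ) ^ k) ^ (-s)) * μ {a | u a < 2 ^ (k + 1)} ≤
        K * ENNReal.ofReal (2 ^ n) * ENNReal.ofReal ((2 ^ (n - s)) ^ k) := by
    intro k
    calc ENNReal.ofReal (((2 : ℝ) ^ k) ^ (-s)) * μ {a | u a < 2 ^ (k + 1)}
        ≤ ENNReal.ofReal (((2 : ℝ) ^ k) ^ (-s)) *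
            (K * ENNReal.ofReal ((2 ^ (k + 1)) ^ n)) := by
          gcongr
          exact hμ _ (one_le_pow₀ one_le_two)
      _ = K * ENNReal.ofReal (2 ^ n) * ENNReal.ofReal ((2 ^ (n - s)) ^ k) := by
          rw [mul_left_comm, ← ENNReal.ofReal_mul (by positivity),
            pow_rpow_neg_mul_pow_succ_rpow two_pos, ENNReal.ofReal_mul (by positivity), mul_assoc]
  calc ∫⁻ a, ENNReal.ofReal (u a ^ (-s)) ∂μ
      ≤ ∑' k : ℕ, ENNReal.ofReal (((2 : ℝ) ^ k) ^ (-s)) * μ {a | u a < 2 ^ (k + 1)} :=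
        lintegral_comp_le_tsum_mul_measure_lt_pow hanti hu one_lt_two
    _ ≤ ∑' k : ℕ, K * ENNReal.ofReal (2 ^ n) * ENNReal.ofReal ((2 ^ (n - s)) ^ k) :=
        ENNReal.tsum_le_tsum hterm
    _ = K * ENNReal.ofReal (2 ^ n * (1 - 2 ^ (n - s))⁻¹) := by
        rw [ENNReal.tsum_mul_left, tsum_ofReal_geometric (by positivity)
          (rpow_sub_lt_one one_lt_two hns), mul_assoc, ← ENNReal.ofReal_mul (by positivity)]

end SublevelSets

lemma lintegral_one_add_dist_div_rpow_neg_le {M : Type*} [PseudoMetricSpace M] [MeasurableSpace M]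
    {μ : Measure M} {x : M} {t n s : ℝ} {K : ℝ≥0∞} (ht : 0 < t) (hs : 0 ≤ s) (hns : n < s)
    (hball : ∀ r, 1 ≤ r → μ (ball x (r * t)) ≤ K * ENNReal.ofReal (r ^ n)) :
    ∫⁻ y, ENNReal.ofReal ((1 + dist x y / t) ^ (-s)) ∂μ ≤
      K * ENNReal.ofReal (2 ^ n * (1 - 2 ^ (n - s))⁻¹) := by
  refine lintegral_rpow_neg_le_of_measure_lt_le hs hns
    (fun y => le_add_of_nonneg_right (by positivity)) fun r hr => ?_
  have hsub : {y | 1 + dist x y / t < r} ⊆ ball x (r * t) := fun y hy => by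
    rw [mem_ball', ← div_lt_iff₀ ht]
    exact (lt_one_add _).trans hy
  exact (measure_mono hsub).trans (hball r hr)

section Kernel

variable {M : Type*} [MetricSpace M] [MeasurableSpace M] {μ : Measure M} {x : M}
  {t n n' σ C₀ C₁ : ℝ}

lemma Dker_le_of_measure_ball_le {y : M} (ht : 0 < t) (hx₀ : μ (ball x t) ≠ 0)
    (hx : μ (ball x t) ≠ ∞) (hy : μ (ball y t) ≠ ∞) (hC₁ : 0 ≤ C₁)
    (hcomp : μ (ball x t) ≤ ENNReal.ofReal (C₁ * (1 + dist x y / t) ^ n') * μ (ball y t)) :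
    Dker μ t σ x y ≤
      √C₁ / (μ (ball x t)).toReal * (1 + dist x y / t) ^ (-(σ - n' / 2)) := by
  have hu : 0 < 1 + dist x y / t := by positivity
  have hcomp_real : (μ (ball x t)).toReal ≤
      C₁ * (1 + dist x y / t) ^ n' * (μ (ball y t)).toReal := by
    simpa only [ENNReal.toReal_mul,
      ENNReal.toReal_ofReal (mul_nonneg hC₁ (Real.rpow_nonneg hu.le n'))] using
      ENNReal.toReal_mono (ENNReal.mul_ne_top ENNReal.ofReal_ne_top hy) hcomp
  calc Dker μ t σ x y
      ≤ √(C₁ * (1 + dist x y / t) ^ n') / (μ (ball x t)).toReal *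
          (1 + dist x y / t) ^ (-σ) := by
        unfold Dker
        gcongr
        exact mul_rpow_neg_half_le_sqrt_div (ENNReal.toReal_pos hx₀ hx) (by positivity) hcomp_real
    _ = √C₁ / (μ (ball x t)).toReal *
          ((1 + dist x y / t) ^ (n' / 2) * (1 + dist x y / t) ^ (-σ)) := by
        rw [Real.sqrt_mul hC₁, Real.sqrt_eq_rpow (_ ^ n'), ← Real.rpow_mul hu.le, mul_one_div]
        ring
    _ = √C₁ / (μ (ball x t)).toReal * (1 + dist x y / t) ^ (-(σ - n' / 2)) := by
        rw [← Real.rpow_add hu, neg_sub, sub_eq_add_neg]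

theorem integral_Dker_le_general (ht : 0 < t) (hpos : μ (ball x t) ≠ 0)
    (hfin : ∀ y, μ (ball y t) ≠ ∞) (hn : 0 ≤ n)
    (hhom : ∀ lam : ℝ, 1 ≤ lam →
      μ (ball x (lam * t)) ≤ ENNReal.ofReal (C₀ * lam ^ n) * μ (ball x t))
    (hC₁ : 0 ≤ C₁)
    (hcomp : ∀ y, μ (ball x t) ≤
      ENNReal.ofReal (C₁ * (1 + dist x y / t) ^ n') * μ (ball y t))
    (hσ : n + n' / 2 < σ) :
    ∫⁻ y, ENNReal.ofReal (Dker μ t σ x y) ∂μ ≤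
      ENNReal.ofReal (√C₁ * C₀ * (2 ^ n * (1 - 2 ^ (n - (σ - n' / 2)))⁻¹)) := by
  set s := σ - n' / 2
  set V := (μ (ball x t)).toReal
  set G : ℝ := 2 ^ n * (1 - 2 ^ (n - s))⁻¹
  have hns : n < s := lt_sub_iff_add_lt.2 hσ
  have hV : 0 < V := ENNReal.toReal_pos hpos (hfin x)
  have hG : 0 ≤ G := (rpow_mul_inv_one_sub_rpow_pos one_lt_two hns).le
  have hball : ∀ r : ℝ, 1 ≤ r →
      μ (ball x (r * t)) ≤ ENNReal.ofReal (C₀ * V) * ENNReal.ofReal (r ^ n) := by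
    intro r hr
    have hr_pow : 0 ≤ r ^ n := Real.rpow_nonneg (zero_le_one.trans hr) n
    refine (hhom r hr).trans_eq ?_
    rw [← ENNReal.ofReal_toReal (hfin x), ← ENNReal.ofReal_mul' hV.le,
      ← ENNReal.ofReal_mul' hr_pow, mul_right_comm]
  calc ∫⁻ y, ENNReal.ofReal (Dker μ t σ x y) ∂μ
      ≤ ∫⁻ y, ENNReal.ofReal (√C₁ / V) * ENNReal.ofReal ((1 + dist x y / t) ^ (-s)) ∂μ := by
        refine lintegral_mono fun y => ?_
        rw [← ENNReal.ofReal_mul (by positivity)]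
        exact ENNReal.ofReal_le_ofReal <|
          Dker_le_of_measure_ball_le ht hpos (hfin x) (hfin y) hC₁ (hcomp y)
    _ = ENNReal.ofReal (√C₁ / V) * ∫⁻ y, ENNReal.ofReal ((1 + dist x y / t) ^ (-s)) ∂μ :=
        lintegral_const_mul' _ _ ENNReal.ofReal_ne_top
    _ ≤ ENNReal.ofReal (√C₁ / V) * (ENNReal.ofReal (C₀ * V) * ENNReal.ofReal G) := by
        gcongr
        exact lintegral_one_add_dist_div_rpow_neg_le ht (hn.trans hns.le) hns hball
    _ = ENNReal.ofReal (√C₁ * C₀ * G) := by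
        rw [← ENNReal.ofReal_mul' hG, ← ENNReal.ofReal_mul (by positivity)]
        congr 1
        field_simp

end Kernel

/-- Under the doubling condition, the strong homogeneity property with exponent
`n`, and the comparability property with exponent `n' ∈ [0,n]`, for any `σ > n + n'/2` there is a
constant `C > 0` such that `∫_M D_{t,σ}(x,y) dμ(y) ≤ C` uniformly for all `t > 0` and `x ∈ M`. -/
theorem integral_Dker_le
    {M : Type*} [MetricSpace M] [MeasurableSpace M] (μ : Measure M)
    (c₀ : ℝ) (hc₀ : 1 < c₀)
    (hdoubling : ∀ (x : M) (r : ℝ), 0 < r →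
      0 < μ (ball x (2 * r)) ∧
      μ (ball x (2 * r)) ≤ ENNReal.ofReal c₀ * μ (ball x r) ∧
      μ (ball x (2 * r)) < ⊤)
    (n : ℝ) (hn : 0 < n) (C₀ : ℝ) (hC₀ : 0 < C₀)
    (hhom : ∀ (x : M) (r lam : ℝ), 0 < r → 1 ≤ lam →
      μ (ball x (lam * r)) ≤ ENNReal.ofReal (C₀ * lam ^ n) * μ (ball x r))
    (n' : ℝ) (hn'0 : 0 ≤ n') (hn'n : n' ≤ n) (C₁ : ℝ) (hC₁ : 0 < C₁)
    (hcomp : ∀ (x y : M) (r : ℝ), 0 < r →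
      μ (ball x r) ≤ ENNReal.ofReal (C₁ * (1 + dist x y / r) ^ n') * μ (ball y r)) :
    ∀ σ : ℝ, n + n' / 2 < σ → ∃ C : ℝ, 0 < C ∧ ∀ (t : ℝ), 0 < t → ∀ x : M,
      ∫⁻ y, ENNReal.ofReal (Dker μ t σ x y) ∂μ ≤ ENNReal.ofReal C := by
  intro σ hσ
  refine ⟨√C₁ * C₀ * (2 ^ n * (1 - 2 ^ (n - (σ - n' / 2)))⁻¹),
    mul_pos (by positivity) (rpow_mul_inv_one_sub_rpow_pos one_lt_two (lt_sub_iff_add_lt.2 hσ)),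
    fun t ht x => ?_⟩
  have hball : ∀ y, 0 < μ (ball y t) ∧ μ (ball y t) < ∞ := fun y => by
    simpa only [mul_div_cancel₀ t two_ne_zero] using
      (hdoubling y (t / 2) (half_pos ht)).imp_right And.right
  exact integral_Dker_le_general ht (hball x).1.ne' (fun y => (hball y).2.ne) hn.le
    (fun lam => hhom x t lam ht) hC₁.le (fun y => hcomp x y t ht) hσ
end

section
/- Let (M, ρ, μ) be a metric measure space satisfying the doubling condition, the strong homogeneity property with exponent n, and the comparability property with exponent n' ∈ [0, n]. Suppose σ > n + n'. Then there exists a constant C > 0 such that for all measurable functions f on M, all t > 0 and all x ∈ M, ∫_M |f(y)| / ( μ(B(y,t)) (1 + ρ(x,y)/t)^σ ) dμ(y) ≤ C 𝓜f(x), where 𝓜f(x) := sup_{B ∋ x} μ(B)^{-1} ∫_B |f(y)| dμ(y) is the Hardy–Littlewood maximal function (the supremum ranging over all open balls B containing x). -/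
open MeasureTheory Metric ENNReal

/-- The Hardy–Littlewood maximal function on a metric measure space:
`𝓜f(x) = sup_{B ∋ x} μ(B)⁻¹ ∫_B |f| dμ`, the supremum ranging over all open balls
containing `x`. -/
noncomputable def HLmaximal {M : Type*} [MetricSpace M] [MeasurableSpace M] (μ : Measure M)
    (f : M → ℝ) (x : M) : ℝ≥0∞ :=
  ⨆ (z : M) (r : ℝ) (_ : x ∈ ball z r),
    (μ (ball z r))⁻¹ * ∫⁻ y in ball z r, ENNReal.ofReal |f y| ∂μ

/-!
Decompose `M` into the dyadic shells `2^k ≤ 1 + ρ(x,y)/t < 2^(k+1)`, `k ∈ ℕ`. On the `k`-th shell,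
strong homogeneity followed by comparability gives
`μ(B(x, 2^(k+1) t)) ≤ C₀ C₁ 2^((k+1)n) (1 + ρ(x,y)/t)^n' μ(B(y,t))`, so the kernel is at most
`C₀ C₁ 2^n q^k / μ(B(x, 2^(k+1) t))` with `q = 2^(n+n'-σ) < 1`. As the shell lies in
`B(x, 2^(k+1) t)`, it contributes at most `C₀ C₁ 2^n q^k` times the maximal function, and the
geometric series converges.

The σ-algebra on `M` is arbitrary, so balls and shells need not be measurable. The argument only
uses subadditivity over a cover and domination on a set by a measurable function, both of which
hold on arbitrary sets.
-/

lemma rpow_neg_mul_two_pow_rpow_mul_rpow_le (n : ℝ) {n' σ u : ℝ} (hσ : n' ≤ σ)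
    {k : ℕ} (hu : (2 : ℝ) ^ k ≤ u) :
    u ^ (-σ) * (((2 : ℝ) ^ (k + 1)) ^ n * u ^ n') ≤ 2 ^ n * ((2 : ℝ) ^ (n + n' - σ)) ^ k := by
  have h2k : (0 : ℝ) < 2 ^ k := by positivity
  calc u ^ (-σ) * (((2 : ℝ) ^ (k + 1)) ^ n * u ^ n')
      = ((2 : ℝ) ^ (k + 1)) ^ n * u ^ (n' - σ) := by
        rw [show n' - σ = -σ + n' by ring, Real.rpow_add (h2k.trans_le hu)]; ring
    _ ≤ ((2 : ℝ) ^ (k + 1)) ^ n * ((2 : ℝ) ^ k) ^ (n' - σ) :=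
        mul_le_mul_of_nonneg_left (Real.rpow_le_rpow_of_nonpos h2k hu (sub_nonpos.2 hσ))
          (by positivity)
    _ = 2 ^ n * ((2 : ℝ) ^ (n + n' - σ)) ^ k := by
        simp only [← Real.rpow_natCast, ← Real.rpow_mul zero_le_two, ← Real.rpow_add zero_lt_two]
        congr 1
        push_cast
        ring

section DyadicShell

variable {M : Type*} [PseudoMetricSpace M]

/-- The `k`-th dyadic shell around `x` at scale `t`. It is measured by `1 + ρ(x,y)/t` rather than
by `ρ(x,y)/t`, so that the shells with `k ∈ ℕ` already cover the whole space. -/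
def dyadicShell (x : M) (t : ℝ) (k : ℕ) : Set M :=
  {y | (2 : ℝ) ^ k ≤ 1 + dist x y / t ∧ 1 + dist x y / t < 2 ^ (k + 1)}

lemma iUnion_dyadicShell (x : M) {t : ℝ} (ht : 0 < t) : ⋃ k, dyadicShell x t k = Set.univ :=
  Set.iUnion_eq_univ_iff.2 fun y =>
    exists_nat_pow_near (le_add_of_nonneg_right (by positivity : 0 ≤ dist x y / t)) one_lt_two

lemma dyadicShell_subset_ball (x : M) {t : ℝ} (ht : 0 < t) (k : ℕ) :
    dyadicShell x t k ⊆ ball x (2 ^ (k + 1) * t) := by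
  rintro y ⟨-, hy⟩
  rw [mem_ball', ← div_lt_iff₀ ht]
  linarith

end DyadicShell

section CenteredMaximal

variable {M : Type*} [PseudoMetricSpace M] [MeasurableSpace M] {μ : Measure M}

/-- The centered Hardy–Littlewood maximal function of a nonnegative function: the supremum of its
averages over the balls centered at `x`, which are the only balls the shell decomposition around `x`
calls for. A ball of measure `0` or `∞` contributes `0`. -/
noncomputable def centeredMaximal (μ : Measure M) (g : M → ℝ≥0∞) (x : M) : ℝ≥0∞ :=
  ⨆ (r : ℝ) (_ : 0 < r), (μ (ball x r))⁻¹ * ∫⁻ y in ball x r, g y ∂μ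

lemma inv_measure_ball_mul_lintegral_le_centeredMaximal (g : M → ℝ≥0∞) (x : M) {r : ℝ}
    (hr : 0 < r) : (μ (ball x r))⁻¹ * ∫⁻ y in ball x r, g y ∂μ ≤ centeredMaximal μ g x :=
  le_iSup₂_of_le r hr le_rfl

lemma setLIntegral_mul_le_centeredMaximal {g K : M → ℝ≥0∞} (hg : AEMeasurable g μ) {x : M} {r : ℝ}
    (hr : 0 < r) {s : Set M} (hs : s ⊆ ball x r) {c : ℝ≥0∞}
    (hK : ∀ y ∈ s, K y ≤ c / μ (ball x r)) :
    ∫⁻ y in s, g y * K y ∂μ ≤ c * centeredMaximal μ g x :=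
  calc ∫⁻ y in s, g y * K y ∂μ
      ≤ ∫⁻ y in s, g y * (c / μ (ball x r)) ∂μ :=
        setLIntegral_mono_ae (hg.restrict.mul_const _) <|
          .of_forall fun y hy => mul_le_mul_right (hK y hy) _
    _ ≤ ∫⁻ y in ball x r, g y * (c / μ (ball x r)) ∂μ := lintegral_mono_set hs
    _ = c * ((μ (ball x r))⁻¹ * ∫⁻ y in ball x r, g y ∂μ) := by
        rw [lintegral_mul_const'' _ hg.restrict, div_eq_mul_inv, mul_comm, mul_assoc]
    _ ≤ c * centeredMaximal μ g x := by
        gcongr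
        exact inv_measure_ball_mul_lintegral_le_centeredMaximal g x hr

end CenteredMaximal

lemma centeredMaximal_le_HLmaximal {M : Type*} [MetricSpace M] [MeasurableSpace M]
    (μ : Measure M) (f : M → ℝ) (x : M) :
    centeredMaximal μ (fun y => ENNReal.ofReal |f y|) x ≤ HLmaximal μ f x :=
  iSup₂_le fun r hr => le_iSup₂_of_le x r (le_iSup_of_le (mem_ball_self hr) le_rfl)

section BallGrowth

variable {M : Type*} [PseudoMetricSpace M] [MeasurableSpace M] {μ : Measure M}
  {n n' C₀ C₁ σ t : ℝ}

/-- The strong homogeneity property of `μ` with exponent `n` and constant `C₀`, which bounds the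
growth of concentric balls. -/
def IsStronglyHomogeneous (μ : Measure M) (n C₀ : ℝ) : Prop :=
  ∀ (x : M) (r lam : ℝ), 0 < r → 1 ≤ lam →
    μ (ball x (lam * r)) ≤ ENNReal.ofReal (C₀ * lam ^ n) * μ (ball x r)

/-- The comparability property of `μ` with exponent `n'` and constant `C₁`, which relates the
measures of balls of the same radius. -/
def IsBallComparable (μ : Measure M) (n' C₁ : ℝ) : Prop :=
  ∀ (x y : M) (r : ℝ), 0 < r →
    μ (ball x r) ≤ ENNReal.ofReal (C₁ * (1 + dist x y / r) ^ n') * μ (ball y r)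

lemma IsStronglyHomogeneous.measure_ball_mul_le (hhom : IsStronglyHomogeneous μ n C₀)
    (hcomp : IsBallComparable μ n' C₁) (hC₀ : 0 ≤ C₀) (x y : M) (ht : 0 < t) {lam : ℝ}
    (hlam : 1 ≤ lam) :
    μ (ball x (lam * t)) ≤
      ENNReal.ofReal (C₀ * lam ^ n * (C₁ * (1 + dist x y / t) ^ n')) * μ (ball y t) := by
  rw [ENNReal.ofReal_mul (mul_nonneg hC₀ (Real.rpow_nonneg (zero_le_one.trans hlam) n)), mul_assoc]
  exact (hhom x t lam ht hlam).trans (by gcongr; exact hcomp x y t ht)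

lemma rpow_neg_div_measure_ball_le_of_mem_dyadicShell (hhom : IsStronglyHomogeneous μ n C₀)
    (hcomp : IsBallComparable μ n' C₁) (hC₀ : 0 < C₀) (hC₁ : 0 < C₁) (hσ : n' ≤ σ) (ht : 0 < t)
    {x y : M} {k : ℕ} (hy : y ∈ dyadicShell x t k) :
    ENNReal.ofReal ((1 + dist x y / t) ^ (-σ)) / μ (ball y t) ≤
      ENNReal.ofReal (C₀ * C₁ * 2 ^ n * ((2 : ℝ) ^ (n + n' - σ)) ^ k) /
        μ (ball x (2 ^ (k + 1) * t)) := by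
  set u : ℝ := 1 + dist x y / t
  have hu : 0 < u := by positivity
  set c : ℝ := C₀ * ((2 : ℝ) ^ (k + 1)) ^ n * (C₁ * u ^ n')
  have hc : 0 < c := mul_pos (by positivity) (mul_pos hC₁ (Real.rpow_pos_of_pos hu n'))
  have hball : μ (ball x (2 ^ (k + 1) * t)) ≤ ENNReal.ofReal c * μ (ball y t) :=
    hhom.measure_ball_mul_le hcomp hC₀.le x y ht (one_le_pow₀ one_le_two)
  have hweight : c * u ^ (-σ) ≤ C₀ * C₁ * 2 ^ n * ((2 : ℝ) ^ (n + n' - σ)) ^ k :=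
    calc c * u ^ (-σ) = C₀ * C₁ * (u ^ (-σ) * (((2 : ℝ) ^ (k + 1)) ^ n * u ^ n')) := by ring
      _ ≤ C₀ * C₁ * (2 ^ n * ((2 : ℝ) ^ (n + n' - σ)) ^ k) :=
        mul_le_mul_of_nonneg_left (rpow_neg_mul_two_pow_rpow_mul_rpow_le n hσ hy.1) (by positivity)
      _ = _ := by ring
  calc ENNReal.ofReal (u ^ (-σ)) / μ (ball y t)
      = ENNReal.ofReal (c * u ^ (-σ)) / (ENNReal.ofReal c * μ (ball y t)) := by
        rw [ENNReal.ofReal_mul hc.le,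
          ENNReal.mul_div_mul_left _ _ (ENNReal.ofReal_pos.2 hc).ne' ENNReal.ofReal_ne_top]
    _ ≤ _ := ENNReal.div_le_div (ENNReal.ofReal_le_ofReal hweight) hball

theorem integral_le_maximal_general (hhom : IsStronglyHomogeneous μ n C₀)
    (hcomp : IsBallComparable μ n' C₁) (hC₀ : 0 < C₀) (hC₁ : 0 < C₁) (hn : 0 ≤ n)
    (hσ : n + n' < σ) {g : M → ℝ≥0∞} (hg : AEMeasurable g μ) (ht : 0 < t) (x : M) :
    ∫⁻ y, g y * (ENNReal.ofReal ((1 + dist x y / t) ^ (-σ)) / μ (ball y t)) ∂μ ≤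
      ENNReal.ofReal (C₀ * C₁ * 2 ^ n * (1 - 2 ^ (n + n' - σ))⁻¹) * centeredMaximal μ g x := by
  set K : M → ℝ≥0∞ := fun y => ENNReal.ofReal ((1 + dist x y / t) ^ (-σ)) / μ (ball y t)
  set q : ℝ := 2 ^ (n + n' - σ)
  have hq0 : 0 ≤ q := by positivity
  have hq1 : q < 1 := Real.rpow_lt_one_of_one_lt_of_neg one_lt_two (by linarith)
  have hshell (k : ℕ) : ∫⁻ y in dyadicShell x t k, g y * K y ∂μ ≤
      ENNReal.ofReal (C₀ * C₁ * 2 ^ n * q ^ k) * centeredMaximal μ g x :=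
    setLIntegral_mul_le_centeredMaximal hg (by positivity) (dyadicShell_subset_ball x ht k)
      fun _ => rpow_neg_div_measure_ball_le_of_mem_dyadicShell hhom hcomp hC₀ hC₁ (by linarith) ht
  calc ∫⁻ y, g y * K y ∂μ = ∫⁻ y in ⋃ k, dyadicShell x t k, g y * K y ∂μ := by
        rw [iUnion_dyadicShell x ht, Measure.restrict_univ]
    _ ≤ ∑' k, ∫⁻ y in dyadicShell x t k, g y * K y ∂μ := lintegral_iUnion_le _ _
    _ ≤ ∑' k, ENNReal.ofReal (C₀ * C₁ * 2 ^ n * q ^ k) * centeredMaximal μ g x :=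
        ENNReal.tsum_le_tsum hshell
    _ = ENNReal.ofReal (C₀ * C₁ * 2 ^ n * (1 - q)⁻¹) * centeredMaximal μ g x := by
        rw [ENNReal.tsum_mul_right, ← ENNReal.ofReal_tsum_of_nonneg (fun k => by positivity)
          ((summable_geometric_of_lt_one hq0 hq1).mul_left _), tsum_mul_left,
          tsum_geometric_of_lt_one hq0 hq1]

end BallGrowth

/-- Under the doubling condition, the strong homogeneity property with exponent
`n`, and the comparability property with exponent `n' ∈ [0,n]`, if `σ > n + n'` then there is a
constant `C > 0` such that for all measurable `f`, all `t > 0` and all `x`,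
`∫_M |f(y)| / (μ(B(y,t)) (1 + ρ(x,y)/t)^σ) dμ(y) ≤ C 𝓜f(x)`. -/
theorem integral_le_maximal
    {M : Type*} [MetricSpace M] [MeasurableSpace M] (μ : Measure M)
    (c₀ : ℝ) (hc₀ : 1 < c₀)
    (hdoubling : ∀ (x : M) (r : ℝ), 0 < r →
      0 < μ (ball x (2 * r)) ∧
      μ (ball x (2 * r)) ≤ ENNReal.ofReal c₀ * μ (ball x r) ∧
      μ (ball x (2 * r)) < ⊤)
    (n : ℝ) (hn : 0 < n) (C₀ : ℝ) (hC₀ : 0 < C₀)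
    (hhom : ∀ (x : M) (r lam : ℝ), 0 < r → 1 ≤ lam →
      μ (ball x (lam * r)) ≤ ENNReal.ofReal (C₀ * lam ^ n) * μ (ball x r))
    (n' : ℝ) (hn'0 : 0 ≤ n') (hn'n : n' ≤ n) (C₁ : ℝ) (hC₁ : 0 < C₁)
    (hcomp : ∀ (x y : M) (r : ℝ), 0 < r →
      μ (ball x r) ≤ ENNReal.ofReal (C₁ * (1 + dist x y / r) ^ n') * μ (ball y r))
    (σ : ℝ) (hσ : n + n' < σ) :
    ∃ C : ℝ, 0 < C ∧ ∀ f : M → ℝ, Measurable f → ∀ (t : ℝ), 0 < t → ∀ x : M,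
      ∫⁻ y, ENNReal.ofReal (|f y| * (1 + dist x y / t) ^ (-σ)) / μ (ball y t) ∂μ ≤
        ENNReal.ofReal C * HLmaximal μ f x := by
  have hq : (2 : ℝ) ^ (n + n' - σ) < 1 :=
    Real.rpow_lt_one_of_one_lt_of_neg one_lt_two (by linarith)
  have hC : 0 < C₀ * C₁ * 2 ^ n * (1 - 2 ^ (n + n' - σ))⁻¹ :=
    mul_pos (by positivity) (inv_pos.2 (sub_pos.2 hq))
  refine ⟨_, hC, fun f hf t ht x => ?_⟩
  simp only [ENNReal.ofReal_mul (abs_nonneg _), mul_div_assoc]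
  calc _ ≤ _ := integral_le_maximal_general hhom hcomp hC₀ hC₁ hn.le hσ (by fun_prop) ht x
    _ ≤ _ := by gcongr; exact centeredMaximal_le_HLmaximal μ f x
end

section
/- Let (M, ρ, μ) be a metric measure space satisfying the doubling condition, the strong homogeneity property with exponent n, and the comparability property with exponent n' ∈ [0, n]. For any σ > n + n' there exists a constant c > 0 such that for all t, s > 0 and all x, y ∈ M, ∫_M D_{t,σ}(x,z) D_{s,σ}(z,y) dμ(z) ≤ c D_{t∨s, σ−n−n'}(x,y), where t∨s := max{t,s}. -/
/-!
By symmetry of the kernel one may assume `s ≤ t`. Write `V(x,r) = μ(B(x,r))` and `δ = σ - n - n'`.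
Comparability moves the volume factors centred at `z` to `y`, at the price of
`C₁ (1 + ρ(y,z)/s)^{n'}`, which leaves
`V(y,s)⁻¹ (1 + ρ(x,z)/t)^{-σ} (1 + ρ(y,z)/s)^{-(n+δ)}` to be integrated.
Since `t + ρ(x,y) ≤ (t + ρ(x,z)) + ρ(y,z)`, one of the two summands is at least half of the
left-hand side. If it is the first, the `x`-factor is at most `2^σ (1 + ρ(x,y)/t)^{-δ}`, and the
`y`-factor has integral `≲ V(y,s)`. If it is the second, the `y`-factor is at most
`2^σ R^{-n} (1 + ρ(x,y)/t)^{-δ}` with `R = (t + ρ(x,y))/s`, and the `x`-factor has integral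
`≲ V(x,t) ≤ V(y,Rs) ≲ R^n V(y,s)`.

The σ-algebra is not assumed to contain the balls, so the lower integral need not be subadditive on
these factors. They are therefore replaced by measurable majorants, which are dyadic sums of
indicators of measurable hulls of balls.
-/

open MeasureTheory Metric

lemma rpow_neg_le_mul_rpow_neg {u v K p : ℝ} (hu : 0 < u) (hK : 0 < K) (hp : 0 ≤ p)
    (h : u ≤ K * v) : v ^ (-p) ≤ K ^ p * u ^ (-p) := by
  have hv : 0 < v := pos_of_mul_pos_right (hu.trans_le h) hK.le
  calc v ^ (-p) = K ^ p * (K * v) ^ (-p) := by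
        rw [Real.mul_rpow hK.le hv.le, Real.rpow_neg hK.le,
          mul_inv_cancel_left₀ (Real.rpow_pos_of_pos hK p).ne']
    _ ≤ K ^ p * u ^ (-p) := by
        gcongr ?_ * ?_
        exact Real.rpow_le_rpow_of_nonpos hu h (neg_nonpos.2 hp)

section Decay

variable {n δ p s t a b d : ℝ}

lemma one_add_div_rpow_neg_le_of_add_le_two_mul_add (hδ : 0 ≤ δ) (hp : δ ≤ p) (ht : 0 < t)
    (hd : 0 ≤ d) (h : t + d ≤ 2 * (t + a)) :
    (1 + a / t) ^ (-p) ≤ 2 ^ p * (1 + d / t) ^ (-δ) := by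
  have hone : 1 ≤ 1 + d / t := le_add_of_nonneg_right (by positivity)
  have hle : 1 + d / t ≤ 2 * (1 + a / t) := by
    have h' := div_le_div_of_nonneg_right h ht.le
    rwa [add_div, mul_div_assoc, add_div, div_self ht.ne'] at h'
  calc (1 + a / t) ^ (-p) ≤ 2 ^ p * (1 + d / t) ^ (-p) :=
        rpow_neg_le_mul_rpow_neg (by positivity) two_pos (hδ.trans hp) hle
    _ ≤ 2 ^ p * (1 + d / t) ^ (-δ) := by gcongr

lemma one_add_div_rpow_neg_le_of_add_le_two_mul (hn : 0 ≤ n) (hδ : 0 ≤ δ) (hs : 0 < s)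
    (hst : s ≤ t) (hd : 0 ≤ d) (h : t + d ≤ 2 * b) :
    (1 + b / s) ^ (-(n + δ)) ≤
      2 ^ (n + δ) * (((t + d) / s) ^ (-n) * (1 + d / t) ^ (-δ)) := by
  have ht : 0 < t := hs.trans_le hst
  have hle : (t + d) / s ≤ 2 * (1 + b / s) := by
    have h' := div_le_div_of_nonneg_right h hs.le
    rw [mul_div_assoc] at h'
    linarith
  have hscale : 1 + d / t ≤ (t + d) / s := by
    rw [← div_self ht.ne', ← add_div]
    gcongr
  calc (1 + b / s) ^ (-(n + δ)) ≤ 2 ^ (n + δ) * ((t + d) / s) ^ (-(n + δ)) :=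
        rpow_neg_le_mul_rpow_neg (by positivity) two_pos (by positivity) hle
    _ = 2 ^ (n + δ) * (((t + d) / s) ^ (-n) * ((t + d) / s) ^ (-δ)) := by
        rw [neg_add, Real.rpow_add (show 0 < (t + d) / s by positivity)]
    _ ≤ 2 ^ (n + δ) * (((t + d) / s) ^ (-n) * (1 + d / t) ^ (-δ)) := by
        gcongr 2 ^ (n + δ) * (_ * ?_)
        exact Real.rpow_le_rpow_of_nonpos (by positivity) hscale (neg_nonpos.2 hδ)

lemma one_add_div_rpow_neg_mul_le (hn : 0 ≤ n) (hδ : 0 ≤ δ) (hp : n + δ ≤ p) (hs : 0 < s)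
    (hst : s ≤ t) (ha : 0 ≤ a) (hb : 0 ≤ b) (hd : 0 ≤ d) (htri : d ≤ a + b) :
    (1 + a / t) ^ (-p) * (1 + b / s) ^ (-(n + δ)) ≤
      2 ^ p * (1 + d / t) ^ (-δ) *
        ((1 + b / s) ^ (-(n + δ)) + ((t + d) / s) ^ (-n) * (1 + a / t) ^ (-p)) := by
  have ht : 0 < t := hs.trans_le hst
  set α := (1 + a / t) ^ (-p)
  set β := (1 + b / s) ^ (-(n + δ))
  set w := (1 + d / t) ^ (-δ)
  set q := ((t + d) / s) ^ (-n)
  have : 0 ≤ α := by positivity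
  have hβ : 0 ≤ β := by positivity
  have : 0 ≤ q := by positivity
  obtain hfar | hnear : t + d ≤ 2 * b ∨ t + d ≤ 2 * (t + a) := by
    by_contra! hlt
    linarith
  · have hβ_le : β ≤ 2 ^ p * (q * w) :=
      (one_add_div_rpow_neg_le_of_add_le_two_mul hn hδ hs hst hd hfar).trans (by gcongr; norm_num)
    calc α * β ≤ α * (2 ^ p * (q * w)) := by gcongr
      _ = 2 ^ p * w * (q * α) := by ring
      _ ≤ 2 ^ p * w * (β + q * α) := by
          gcongr
          exact le_add_of_nonneg_left hβ
  · have hα_le : α ≤ 2 ^ p * w :=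
      one_add_div_rpow_neg_le_of_add_le_two_mul_add hδ (by linarith) ht hd hnear
    calc α * β ≤ 2 ^ p * w * β := by gcongr
      _ ≤ 2 ^ p * w * (β + q * α) := by
          gcongr
          exact le_add_of_nonneg_right (by positivity)

end Decay

section Volume

variable {M : Type*} [PseudoMetricSpace M] [MeasurableSpace M]

/-- The strong homogeneity property of `μ` with exponent `n` and constant `C`. -/
def StronglyHomogeneous (μ : Measure M) (n C : ℝ) : Prop :=
  ∀ (x : M) (r lam : ℝ), 0 < r → 1 ≤ lam →
    μ (ball x (lam * r)) ≤ ENNReal.ofReal (C * lam ^ n) * μ (ball x r)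

/-- The comparability property of `μ` with exponent `n'` and constant `C`: balls of equal radius
have comparable volume, up to a power of the distance of their centres. -/
def ComparableBalls (μ : Measure M) (n' C : ℝ) : Prop :=
  ∀ (x y : M) (r : ℝ), 0 < r →
    μ (ball x r) ≤ ENNReal.ofReal (C * (1 + dist x y / r) ^ n') * μ (ball y r)

variable {μ : Measure M} {n n' C δ p r s t τ : ℝ}

lemma StronglyHomogeneous.measure_ball_le (hμ : StronglyHomogeneous μ n C) {x y : M}
    (hs : 0 < s) (h : s ≤ t + dist x y) :
    μ (ball x t) ≤ ENNReal.ofReal (C * ((t + dist x y) / s) ^ n) * μ (ball y s) :=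
  calc μ (ball x t) ≤ μ (ball y ((t + dist x y) / s * s)) :=
        measure_mono (ball_subset_ball' (div_mul_cancel₀ _ hs.ne').ge)
    _ ≤ _ := hμ y s _ hs ((one_le_div hs).2 h)

lemma ComparableBalls.measureReal_ball_le (hμ : ComparableBalls μ n' C) (hC : 0 ≤ C) {x y : M}
    (hr : 0 < r) (hy : μ (ball y r) ≠ ⊤) :
    μ.real (ball x r) ≤ C * (1 + dist x y / r) ^ n' * μ.real (ball y r) := by
  have h := ENNReal.toReal_mono (ENNReal.mul_ne_top ENNReal.ofReal_ne_top hy) (hμ x y r hr)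
  rwa [ENNReal.toReal_mul, ENNReal.toReal_ofReal (by positivity)] at h

/-- A measurable majorant of `z ↦ (1 + ρ(x,z)/t)^{-τ}`. It is built from measurable hulls of balls
because the balls themselves need not be measurable. -/
noncomputable def dyadicMajorant (μ : Measure M) (τ t : ℝ) (x z : M) : ENNReal :=
  ∑' k : ℕ, (toMeasurable μ (ball x (2 ^ (k + 1) * t))).indicator
    (fun _ => ENNReal.ofReal ((2 ^ k : ℝ) ^ (-τ))) z

lemma measurable_dyadicMajorant (x : M) : Measurable (dyadicMajorant μ τ t x) :=
  Measurable.tsum fun _ => measurable_const.indicator (measurableSet_toMeasurable _ _)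

lemma le_dyadicMajorant (hτ : 0 ≤ τ) (ht : 0 < t) (x z : M) :
    ENNReal.ofReal ((1 + dist x z / t) ^ (-τ)) ≤ dyadicMajorant μ τ t x z := by
  obtain ⟨k, hk_le, hk_lt⟩ := exists_nat_pow_near
    (le_add_of_nonneg_right (by positivity) : 1 ≤ 1 + dist x z / t) one_lt_two
  have hz : z ∈ ball x (2 ^ (k + 1) * t) := by
    rw [mem_ball', ← div_lt_iff₀ ht]
    linarith
  refine le_trans ?_ (ENNReal.le_tsum k)
  rw [Set.indicator_of_mem (subset_toMeasurable μ _ hz)]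
  exact ENNReal.ofReal_le_ofReal
    (Real.rpow_le_rpow_of_nonpos (by positivity) hk_le (neg_nonpos.2 hτ))

lemma StronglyHomogeneous.ofReal_mul_measure_ball_two_pow_le (hμ : StronglyHomogeneous μ n C)
    (ht : 0 < t) (x : M) (k : ℕ) :
    ENNReal.ofReal ((2 ^ k : ℝ) ^ (-τ)) * μ (ball x (2 ^ (k + 1) * t)) ≤
      ENNReal.ofReal (C * 2 ^ n * (2 ^ (n - τ)) ^ k) * μ (ball x t) := by
  have hexp : (2 ^ k : ℝ) ^ (-τ) * (C * (2 ^ (k + 1)) ^ n) = C * 2 ^ n * (2 ^ (n - τ)) ^ k := by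
    rw [Real.rpow_pow_comm zero_le_two, sub_eq_add_neg, Real.rpow_add (by positivity), pow_succ',
      Real.mul_rpow zero_le_two (by positivity)]
    ring
  rw [← hexp, ENNReal.ofReal_mul (by positivity), mul_assoc]
  gcongr
  exact hμ x t _ ht (one_le_pow₀ one_le_two)

lemma StronglyHomogeneous.exists_lintegral_dyadicMajorant_le (hμ : StronglyHomogeneous μ n C)
    (hC : 0 < C) (hτ : n < τ) :
    ∃ A : ℝ, 0 < A ∧ ∀ (x : M) (t : ℝ), 0 < t →
      ∫⁻ z, dyadicMajorant μ τ t x z ∂μ ≤ ENNReal.ofReal A * μ (ball x t) := by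
  have hq : (2 : ℝ) ^ (n - τ) < 1 :=
    Real.rpow_lt_one_of_one_lt_of_neg one_lt_two (sub_neg.2 hτ)
  have : 0 < 1 - (2 : ℝ) ^ (n - τ) := sub_pos.2 hq
  refine ⟨C * 2 ^ n * (1 - 2 ^ (n - τ))⁻¹, by positivity, fun x t ht => ?_⟩
  calc ∫⁻ z, dyadicMajorant μ τ t x z ∂μ
      = ∑' k : ℕ, ENNReal.ofReal ((2 ^ k : ℝ) ^ (-τ)) * μ (ball x (2 ^ (k + 1) * t)) := by
        have hmeas (k : ℕ) : MeasurableSet (toMeasurable μ (ball x (2 ^ (k + 1) * t))) :=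
          measurableSet_toMeasurable _ _
        unfold dyadicMajorant
        rw [lintegral_tsum fun k => (measurable_const.indicator (hmeas k)).aemeasurable]
        simp only [lintegral_indicator_const (hmeas _), measure_toMeasurable]
    _ ≤ ∑' k : ℕ, ENNReal.ofReal (C * 2 ^ n * (2 ^ (n - τ)) ^ k) * μ (ball x t) :=
        ENNReal.tsum_le_tsum (hμ.ofReal_mul_measure_ball_two_pow_le ht x)
    _ = ENNReal.ofReal (C * 2 ^ n * (1 - 2 ^ (n - τ))⁻¹) * μ (ball x t) := by
        rw [ENNReal.tsum_mul_right, ← ENNReal.ofReal_tsum_of_nonneg (fun k => by positivity)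
          ((summable_geometric_of_lt_one (by positivity) hq).mul_left _), tsum_mul_left,
          tsum_geometric_of_lt_one (by positivity) hq]

lemma ofReal_rpow_neg_mul_rpow_neg_le_dyadicMajorant (hn : 0 ≤ n) (hδ : 0 ≤ δ) (hp : n + δ ≤ p)
    (hs : 0 < s) (hst : s ≤ t) (x y z : M) :
    ENNReal.ofReal ((1 + dist x z / t) ^ (-p) * (1 + dist y z / s) ^ (-(n + δ))) ≤
      ENNReal.ofReal (2 ^ p * (1 + dist x y / t) ^ (-δ)) *
        (dyadicMajorant μ (n + δ) s y z +
          ENNReal.ofReal (((t + dist x y) / s) ^ (-n)) * dyadicMajorant μ p t x z) := by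
  have ht : 0 < t := hs.trans_le hst
  refine (ENNReal.ofReal_le_ofReal (one_add_div_rpow_neg_mul_le hn hδ hp hs hst
    dist_nonneg dist_nonneg dist_nonneg (dist_triangle_right x y z))).trans ?_
  rw [ENNReal.ofReal_mul (by positivity), ENNReal.ofReal_add (by positivity) (by positivity),
    ENNReal.ofReal_mul (p := ((t + dist x y) / s) ^ (-n)) (by positivity)]
  gcongr
  · exact le_dyadicMajorant (by positivity) hs y z
  · exact le_dyadicMajorant (by linarith) ht x z

lemma StronglyHomogeneous.exists_lintegral_rpow_neg_mul_rpow_neg_le (hμ : StronglyHomogeneous μ n C)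
    (hC : 0 < C) (hn : 0 ≤ n) (hδ : 0 < δ) (hp : n + δ ≤ p) :
    ∃ K : ℝ, 0 < K ∧ ∀ (s t : ℝ), 0 < s → s ≤ t → ∀ x y : M,
      ∫⁻ z, ENNReal.ofReal ((1 + dist x z / t) ^ (-p) * (1 + dist y z / s) ^ (-(n + δ))) ∂μ ≤
        ENNReal.ofReal (K * (1 + dist x y / t) ^ (-δ)) * μ (ball y s) := by
  obtain ⟨A, hA, hA_le⟩ := hμ.exists_lintegral_dyadicMajorant_le hC (lt_add_of_pos_right n hδ)
  obtain ⟨B, hB, hB_le⟩ :=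
    hμ.exists_lintegral_dyadicMajorant_le hC ((lt_add_of_pos_right n hδ).trans_le hp)
  refine ⟨2 ^ p * (A + B * C), by positivity, fun s t hs hst x y => ?_⟩
  have ht : 0 < t := hs.trans_le hst
  set w := (1 + dist x y / t) ^ (-δ)
  set R := (t + dist x y) / s
  have hR_pos : 0 < R := by positivity
  have hfar : ENNReal.ofReal (R ^ (-n)) * ∫⁻ z, dyadicMajorant μ p t x z ∂μ ≤
      ENNReal.ofReal (B * C) * μ (ball y s) :=
    calc _ ≤ ENNReal.ofReal (R ^ (-n)) *
          (ENNReal.ofReal B * (ENNReal.ofReal (C * R ^ n) * μ (ball y s))) := by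
          gcongr
          refine (hB_le x t ht).trans ?_
          gcongr
          exact hμ.measure_ball_le hs (hst.trans (le_add_of_nonneg_right dist_nonneg))
      _ = ENNReal.ofReal (B * C) * μ (ball y s) := by
          rw [← mul_assoc, ← mul_assoc, ← ENNReal.ofReal_mul (by positivity),
            ← ENNReal.ofReal_mul (by positivity), Real.rpow_neg hR_pos.le]
          congr 2
          field_simp
  calc _ ≤ ∫⁻ z, ENNReal.ofReal (2 ^ p * w) * (dyadicMajorant μ (n + δ) s y z +
          ENNReal.ofReal (R ^ (-n)) * dyadicMajorant μ p t x z) ∂μ :=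
        lintegral_mono (ofReal_rpow_neg_mul_rpow_neg_le_dyadicMajorant hn hδ.le hp hs hst x y)
    _ = ENNReal.ofReal (2 ^ p * w) * (∫⁻ z, dyadicMajorant μ (n + δ) s y z ∂μ +
          ENNReal.ofReal (R ^ (-n)) * ∫⁻ z, dyadicMajorant μ p t x z ∂μ) := by
        rw [lintegral_const_mul' _ _ ENNReal.ofReal_ne_top,
          lintegral_add_left (measurable_dyadicMajorant y),
          lintegral_const_mul _ (measurable_dyadicMajorant x)]
    _ ≤ ENNReal.ofReal (2 ^ p * w) *
          (ENNReal.ofReal A * μ (ball y s) + ENNReal.ofReal (B * C) * μ (ball y s)) := by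
        gcongr
        exact hA_le y s hs
    _ = ENNReal.ofReal (2 ^ p * (A + B * C) * w) * μ (ball y s) := by
        rw [← add_mul, ← ENNReal.ofReal_add hA.le (by positivity), ← mul_assoc,
          ← ENNReal.ofReal_mul (by positivity), mul_right_comm]

end Volume

section Kernel

variable {M : Type*} [MetricSpace M] [MeasurableSpace M] {μ : Measure M}
  {n n' C₀ C₁ σ s t : ℝ}

lemma Dker_comm (x y : M) : Dker μ t σ x y = Dker μ t σ y x := by
  unfold Dker
  rw [dist_comm, mul_comm (μ (ball x t)).toReal]

lemma Dker_nonneg (ht : 0 ≤ t) (x y : M) : 0 ≤ Dker μ t σ x y := by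
  unfold Dker
  positivity

lemma Dker_le_of_measureReal_ball_le {K : ℝ} {x y z : M} (ht : 0 ≤ t) (hK : 0 < K)
    (hy : 0 < μ.real (ball y t)) (h : μ.real (ball y t) ≤ K * μ.real (ball z t)) :
    Dker μ t σ x z ≤ K ^ (1 / 2 : ℝ) *
      ((μ.real (ball x t) * μ.real (ball y t)) ^ (-(1 / 2) : ℝ) *
        (1 + dist x z / t) ^ (-σ)) := by
  have hz : μ.real (ball z t) ^ (-(1 / 2) : ℝ) ≤
      K ^ (1 / 2 : ℝ) * μ.real (ball y t) ^ (-(1 / 2) : ℝ) :=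
    rpow_neg_le_mul_rpow_neg hy hK (by norm_num) h
  have hsplit (w : M) : (μ.real (ball x t) * μ.real (ball w t)) ^ (-(1 / 2) : ℝ) =
      μ.real (ball x t) ^ (-(1 / 2) : ℝ) * μ.real (ball w t) ^ (-(1 / 2) : ℝ) :=
    Real.mul_rpow measureReal_nonneg measureReal_nonneg
  calc Dker μ t σ x z
      = μ.real (ball x t) ^ (-(1 / 2) : ℝ) * μ.real (ball z t) ^ (-(1 / 2) : ℝ) *
          (1 + dist x z / t) ^ (-σ) := congrArg (· * _) (hsplit z)
    _ ≤ μ.real (ball x t) ^ (-(1 / 2) : ℝ) *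
          (K ^ (1 / 2 : ℝ) * μ.real (ball y t) ^ (-(1 / 2) : ℝ)) * (1 + dist x z / t) ^ (-σ) := by
        gcongr
    _ = _ := by
        rw [hsplit y]
        ring

lemma ComparableBalls.Dker_mul_Dker_le (hμ : ComparableBalls μ n' C₁) (hC₁ : 0 < C₁)
    (hn' : 0 ≤ n') (hball : ∀ (x : M) (r : ℝ), 0 < r → 0 < μ (ball x r) ∧ μ (ball x r) < ⊤)
    (hs : 0 < s) (hst : s ≤ t) (x y z : M) :
    Dker μ t σ x z * Dker μ s σ z y ≤
      C₁ * (μ.real (ball x t) * μ.real (ball y t)) ^ (-(1 / 2) : ℝ) * (μ.real (ball y s))⁻¹ *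
        ((1 + dist x z / t) ^ (-σ) * (1 + dist y z / s) ^ (-(σ - n'))) := by
  have ht : 0 < t := hs.trans_le hst
  have hreal (w : M) {r : ℝ} (hr : 0 < r) : 0 < μ.real (ball w r) :=
    ENNReal.toReal_pos_iff.2 (hball w r hr)
  set b := 1 + dist y z / s with hb
  have hb_pos : 0 < b := by positivity
  set K := C₁ * b ^ n' with hK
  have hK_pos : 0 < K := by positivity
  have hK_s : μ.real (ball y s) ≤ K * μ.real (ball z s) :=
    hμ.measureReal_ball_le hC₁.le hs (hball z s hs).2.ne
  have hK_t : μ.real (ball y t) ≤ K * μ.real (ball z t) :=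
    (hμ.measureReal_ball_le hC₁.le ht (hball z t ht).2.ne).trans (by rw [hK, hb]; gcongr)
  have hKK : K ^ (1 / 2 : ℝ) * K ^ (1 / 2 : ℝ) = K := by
    rw [← Real.rpow_add hK_pos, add_halves, Real.rpow_one]
  have hVV : (μ.real (ball y s) * μ.real (ball y s)) ^ (-(1 / 2) : ℝ) = (μ.real (ball y s))⁻¹ := by
    rw [Real.mul_rpow measureReal_nonneg measureReal_nonneg, ← Real.rpow_add (hreal y hs),
      ← neg_add, add_halves, Real.rpow_neg_one]
  have hbb : b ^ n' * b ^ (-σ) = b ^ (-(σ - n')) := by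
    rw [← Real.rpow_add hb_pos, neg_sub, sub_eq_add_neg]
  have hDt := Dker_le_of_measureReal_ball_le (σ := σ) (x := x) ht.le hK_pos (hreal y ht) hK_t
  have hDs := Dker_le_of_measureReal_ball_le (σ := σ) (x := y) hs.le hK_pos (hreal y hs) hK_s
  rw [Dker_comm z y]
  refine (mul_le_mul hDt hDs (Dker_nonneg hs.le y z) (by positivity)).trans_eq ?_
  rw [hVV, ← hb, ← hbb]
  linear_combination ((μ.real (ball x t) * μ.real (ball y t)) ^ (-(1 / 2) : ℝ) *
    (1 + dist x z / t) ^ (-σ) * (μ.real (ball y s))⁻¹ * b ^ (-σ)) * hKK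

lemma exists_lintegral_Dker_mul_Dker_le_of_le
    (hball : ∀ (x : M) (r : ℝ), 0 < r → 0 < μ (ball x r) ∧ μ (ball x r) < ⊤)
    (hn : 0 ≤ n) (hC₀ : 0 < C₀) (hhom : StronglyHomogeneous μ n C₀)
    (hn' : 0 ≤ n') (hC₁ : 0 < C₁) (hcomp : ComparableBalls μ n' C₁) (hσ : n + n' < σ) :
    ∃ c : ℝ, 0 < c ∧ ∀ (s t : ℝ), 0 < s → s ≤ t → ∀ x y : M,
      ∫⁻ z, ENNReal.ofReal (Dker μ t σ x z * Dker μ s σ z y) ∂μ ≤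
        ENNReal.ofReal (c * Dker μ t (σ - n - n') x y) := by
  obtain ⟨K, hK, hle⟩ := hhom.exists_lintegral_rpow_neg_mul_rpow_neg_le hC₀ hn
    (δ := σ - n - n') (p := σ) (by linarith) (by linarith)
  rw [show n + (σ - n - n') = σ - n' by ring] at hle
  refine ⟨C₁ * K, by positivity, fun s t hs hst x y => ?_⟩
  have ht : 0 < t := hs.trans_le hst
  obtain ⟨hV_pos, hV_lt_top⟩ := hball y s hs
  have hV : 0 < μ.real (ball y s) := ENNReal.toReal_pos_iff.2 ⟨hV_pos, hV_lt_top⟩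
  set v := (μ.real (ball x t) * μ.real (ball y t)) ^ (-(1 / 2) : ℝ)
  set w := (1 + dist x y / t) ^ (-(σ - n - n'))
  have : 0 ≤ v := by positivity
  calc _ ≤ ∫⁻ z, ENNReal.ofReal (C₁ * v * (μ.real (ball y s))⁻¹) * ENNReal.ofReal
          ((1 + dist x z / t) ^ (-σ) * (1 + dist y z / s) ^ (-(σ - n'))) ∂μ := by
        refine lintegral_mono fun z => ?_
        rw [← ENNReal.ofReal_mul (by positivity)]
        exact ENNReal.ofReal_le_ofReal (hcomp.Dker_mul_Dker_le hC₁ hn' hball hs hst x y z)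
    _ ≤ ENNReal.ofReal (C₁ * v * (μ.real (ball y s))⁻¹) *
          (ENNReal.ofReal (K * w) * ENNReal.ofReal (μ.real (ball y s))) := by
        rw [lintegral_const_mul' _ _ ENNReal.ofReal_ne_top, ofReal_measureReal hV_lt_top.ne]
        gcongr
        exact hle s t hs hst x y
    _ = ENNReal.ofReal (C₁ * K * (v * w)) := by
        rw [← ENNReal.ofReal_mul (by positivity), ← ENNReal.ofReal_mul (by positivity)]
        congr 1
        field_simp

theorem integral_Dker_mul_Dker_le_general
    (hball : ∀ (x : M) (r : ℝ), 0 < r → 0 < μ (ball x r) ∧ μ (ball x r) < ⊤)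
    (hn : 0 ≤ n) (hC₀ : 0 < C₀) (hhom : StronglyHomogeneous μ n C₀)
    (hn' : 0 ≤ n') (hC₁ : 0 < C₁) (hcomp : ComparableBalls μ n' C₁) (hσ : n + n' < σ) :
    ∃ c : ℝ, 0 < c ∧ ∀ (t s : ℝ), 0 < t → 0 < s → ∀ x y : M,
      ∫⁻ z, ENNReal.ofReal (Dker μ t σ x z * Dker μ s σ z y) ∂μ ≤
        ENNReal.ofReal (c * Dker μ (max t s) (σ - n - n') x y) := by
  obtain ⟨c, hc, hle⟩ :=
    exists_lintegral_Dker_mul_Dker_le_of_le hball hn hC₀ hhom hn' hC₁ hcomp hσ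
  refine ⟨c, hc, fun t s ht hs x y => ?_⟩
  rcases le_total s t with hst | hts
  · rw [max_eq_left hst]
    exact hle s t hs hst x y
  · have hsymm (z : M) : Dker μ t σ x z * Dker μ s σ z y = Dker μ s σ y z * Dker μ t σ z x := by
      rw [mul_comm, Dker_comm z y, Dker_comm x z]
    simp only [hsymm, max_eq_right hts, Dker_comm x y]
    exact hle t s ht hts y x

end Kernel

/-- Under the doubling condition, the strong homogeneity property with exponent
`n`, and the comparability property with exponent `n' ∈ [0,n]`, for any `σ > n + n'` there exists
`c > 0` such that for all `t, s > 0` and all `x, y ∈ M`,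
`∫_M D_{t,σ}(x,z) D_{s,σ}(z,y) dμ(z) ≤ c D_{max(t,s), σ-n-n'}(x,y)`. -/
theorem integral_Dker_mul_Dker_le
    {M : Type*} [MetricSpace M] [MeasurableSpace M] (μ : Measure M)
    (c₀ : ℝ) (hc₀ : 1 < c₀)
    (hdoubling : ∀ (x : M) (r : ℝ), 0 < r →
      0 < μ (ball x (2 * r)) ∧
      μ (ball x (2 * r)) ≤ ENNReal.ofReal c₀ * μ (ball x r) ∧
      μ (ball x (2 * r)) < ⊤)
    (n : ℝ) (hn : 0 < n) (C₀ : ℝ) (hC₀ : 0 < C₀)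
    (hhom : ∀ (x : M) (r lam : ℝ), 0 < r → 1 ≤ lam →
      μ (ball x (lam * r)) ≤ ENNReal.ofReal (C₀ * lam ^ n) * μ (ball x r))
    (n' : ℝ) (hn'0 : 0 ≤ n') (hn'n : n' ≤ n) (C₁ : ℝ) (hC₁ : 0 < C₁)
    (hcomp : ∀ (x y : M) (r : ℝ), 0 < r →
      μ (ball x r) ≤ ENNReal.ofReal (C₁ * (1 + dist x y / r) ^ n') * μ (ball y r)) :
    ∀ σ : ℝ, n + n' < σ → ∃ c : ℝ, 0 < c ∧
      ∀ (t s : ℝ), 0 < t → 0 < s → ∀ x y : M,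
        ∫⁻ z, ENNReal.ofReal (Dker μ t σ x z * Dker μ s σ z y) ∂μ ≤
          ENNReal.ofReal (c * Dker μ (max t s) (σ - n - n') x y) := by
  refine fun σ hσ => integral_Dker_mul_Dker_le_general (fun x r hr => ?_) hn.le hC₀ hhom hn'0 hC₁
    hcomp hσ
  obtain ⟨hpos, -, hlt⟩ := mul_div_cancel₀ r two_ne_zero ▸ hdoubling x (r / 2) (half_pos hr)
  exact ⟨hpos, hlt⟩
end

section
/- Let (M, ρ, μ) be a metric measure space satisfying the doubling condition and the comparability property with exponent n' ∈ [0, ∞). Then for every σ > n'/2 there is a constant C > 0 such that for all t > 0 and all x, y, z ∈ M with ρ(y,z) < ρ(x,y)/2, one has D_{t,σ}(x,z) ≤ C D_{t, σ−n'/2}(x,y). -/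
/-!
When `ρ(y,z) ≤ ρ(x,y)/2` the triangle inequality makes `1 + ρ(x,z)/t` and `u = 1 + ρ(x,y)/t`
comparable up to a factor `2`, so exchanging them in the decay factor costs at most `2 ^ |σ|`.
Comparability at `y` and `z`, where `1 + ρ(y,z)/t ≤ u`, shows that exchanging `μ(B(z,t))` for
`μ(B(y,t))` in the volume factor costs at most `(C₁ u^{n'})^{1/2}`, and the power `u^{n'/2}` is
absorbed by lowering the decay exponent from `σ` to `σ - n'/2`.
-/

open MeasureTheory Metric

section Rpow

variable {a b K s : ℝ}

theorem rpow_neg_le_rpow_mul_rpow_neg (hb : 0 < b) (hK : 0 ≤ K) (hbKa : b ≤ K * a) (hs : 0 ≤ s) :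
    a ^ (-s) ≤ K ^ s * b ^ (-s) := by
  have ha : 0 < a := pos_of_mul_pos_right (hb.trans_le hbKa) hK
  have hpow : b ^ s ≤ K ^ s * a ^ s :=
    (Real.rpow_le_rpow hb.le hbKa hs).trans_eq (Real.mul_rpow hK ha.le)
  rw [Real.rpow_neg ha.le, Real.rpow_neg hb.le, ← div_eq_mul_inv,
    le_div_iff₀ (Real.rpow_pos_of_pos hb s), inv_mul_le_iff₀ (Real.rpow_pos_of_pos ha s)]
  rwa [mul_comm]

theorem rpow_le_rpow_abs_mul_rpow (ha : 0 < a) (hb : 0 < b) (hK : 0 ≤ K) (haKb : a ≤ K * b)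
    (hbKa : b ≤ K * a) (s : ℝ) : a ^ s ≤ K ^ |s| * b ^ s := by
  rcases le_total 0 s with hs | hs
  · rw [abs_of_nonneg hs, ← Real.mul_rpow hK hb.le]
    exact Real.rpow_le_rpow ha.le haKb hs
  · rw [abs_of_nonpos hs]
    simpa only [neg_neg] using rpow_neg_le_rpow_mul_rpow_neg hb hK hbKa (neg_nonneg.mpr hs)

end Rpow

theorem one_add_div_le_mul_one_add_div {a b t K : ℝ} (ht : 0 ≤ t) (hK : 1 ≤ K) (h : a ≤ K * b) :
    1 + a / t ≤ K * (1 + b / t) :=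
  calc 1 + a / t ≤ K + K * b / t := by gcongr
    _ = K * (1 + b / t) := by ring

theorem toReal_le_mul_toReal_of_le_ofReal_mul {a b : ENNReal} {K : ℝ} (hK : 0 ≤ K) (hb : b ≠ ⊤)
    (h : a ≤ ENNReal.ofReal K * b) : a.toReal ≤ K * b.toReal := by
  have h' := ENNReal.toReal_mono (ENNReal.mul_ne_top ENNReal.ofReal_ne_top hb) h
  rwa [ENNReal.toReal_mul, ENNReal.toReal_ofReal hK] at h'

section Dist

variable {M : Type*} [PseudoMetricSpace M] {x y z : M}

theorem one_add_dist_div_rpow_le (h : dist y z ≤ dist x y / 2) {t : ℝ} (ht : 0 ≤ t) (s : ℝ) :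
    (1 + dist x z / t) ^ s ≤ 2 ^ |s| * (1 + dist x y / t) ^ s := by
  have hxz : dist x z ≤ 2 * dist x y := by
    linarith [dist_triangle x y z, dist_nonneg (x := x) (y := y)]
  have hxy : dist x y ≤ 2 * dist x z := by
    linarith [dist_triangle_right x y z]
  exact rpow_le_rpow_abs_mul_rpow (by positivity) (by positivity) zero_le_two
    (one_add_div_le_mul_one_add_div ht one_le_two hxz)
    (one_add_div_le_mul_one_add_div ht one_le_two hxy) s

end Dist

section Dker

variable {M : Type*} [MetricSpace M] [MeasurableSpace M] {μ : Measure M} {t : ℝ} {x y z : M}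

theorem Dker_sub (ht : 0 < t) (σ s : ℝ) :
    Dker μ t (σ - s) x y = (1 + dist x y / t) ^ s * Dker μ t σ x y := by
  have hu : 0 < 1 + dist x y / t := by positivity
  rw [Dker, Dker, neg_sub, sub_eq_add_neg, Real.rpow_add hu]
  ring

theorem Dker_le_of_measure_ball_le_s7 {K : ℝ} (ht : 0 < t) (hK : 0 ≤ K)
    (hball : ∀ w, 0 < μ (ball w t) ∧ μ (ball w t) < ⊤)
    (hvol : μ (ball y t) ≤ ENNReal.ofReal K * μ (ball z t))
    (hdist : dist y z ≤ dist x y / 2) (σ : ℝ) :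
    Dker μ t σ x z ≤ K ^ (1 / 2 : ℝ) * 2 ^ |σ| * Dker μ t σ x y := by
  have hpos (w : M) : 0 < (μ (ball w t)).toReal :=
    ENNReal.toReal_pos (hball w).1.ne' (hball w).2.ne
  have hprod : (μ (ball x t)).toReal * (μ (ball y t)).toReal
      ≤ K * ((μ (ball x t)).toReal * (μ (ball z t)).toReal) := by
    rw [mul_left_comm]
    gcongr
    exact toReal_le_mul_toReal_of_le_ofReal_mul hK (hball z).2.ne hvol
  have hvolume := rpow_neg_le_rpow_mul_rpow_neg (mul_pos (hpos x) (hpos y)) hK hprod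
    one_half_pos.le
  have hdecay := one_add_dist_div_rpow_le hdist ht.le (-σ)
  rw [abs_neg] at hdecay
  exact (mul_le_mul hvolume hdecay (by positivity) (by positivity)).trans_eq
    (mul_mul_mul_comm _ _ _ _)

theorem measure_ball_pos_and_lt_top_of_two_mul
    (h : ∀ r : ℝ, 0 < r → 0 < μ (ball x (2 * r)) ∧ μ (ball x (2 * r)) < ⊤) (ht : 0 < t) :
    0 < μ (ball x t) ∧ μ (ball x t) < ⊤ := by
  simpa only [mul_div_cancel₀ t two_ne_zero] using h (t / 2) (half_pos ht)

theorem Dker_le_of_dist_lt_general {n' C₁ : ℝ} (ht : 0 < t) (hn' : 0 ≤ n') (hC₁ : 0 ≤ C₁)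
    (hball : ∀ w, 0 < μ (ball w t) ∧ μ (ball w t) < ⊤)
    (hcomp : μ (ball y t) ≤ ENNReal.ofReal (C₁ * (1 + dist y z / t) ^ n') * μ (ball z t))
    (hdist : dist y z ≤ dist x y / 2) (σ : ℝ) :
    Dker μ t σ x z ≤ C₁ ^ (1 / 2 : ℝ) * 2 ^ |σ| * Dker μ t (σ - n' / 2) x y := by
  have hyz : dist y z ≤ dist x y := hdist.trans (half_le_self dist_nonneg)
  have hvol : μ (ball y t)
      ≤ ENNReal.ofReal (C₁ * (1 + dist x y / t) ^ n') * μ (ball z t) :=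
    hcomp.trans (by gcongr)
  have hsqrt : (C₁ * (1 + dist x y / t) ^ n') ^ (1 / 2 : ℝ)
      = C₁ ^ (1 / 2 : ℝ) * (1 + dist x y / t) ^ (n' / 2) := by
    rw [Real.mul_rpow hC₁ (by positivity), ← Real.rpow_mul (by positivity), mul_one_div]
  calc Dker μ t σ x z
      ≤ (C₁ * (1 + dist x y / t) ^ n') ^ (1 / 2 : ℝ) * 2 ^ |σ| * Dker μ t σ x y :=
        Dker_le_of_measure_ball_le_s7 ht (by positivity) hball hvol hdist σ
    _ = C₁ ^ (1 / 2 : ℝ) * 2 ^ |σ| * Dker μ t (σ - n' / 2) x y := by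
        rw [hsqrt, Dker_sub ht]
        ring

end Dker

/-- Under the doubling condition and the comparability property with exponent
`n' ≥ 0`, for every `σ > n'/2` there is `C > 0` such that for all `t > 0` and all `x, y, z`
with `ρ(y,z) < ρ(x,y)/2`, one has `D_{t,σ}(x,z) ≤ C D_{t, σ - n'/2}(x,y)`. -/
theorem Dker_le_of_dist_lt
    {M : Type*} [MetricSpace M] [MeasurableSpace M] (μ : Measure M)
    (c₀ : ℝ) (hc₀ : 1 < c₀)
    (hdoubling : ∀ (x : M) (r : ℝ), 0 < r →
      0 < μ (ball x (2 * r)) ∧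
      μ (ball x (2 * r)) ≤ ENNReal.ofReal c₀ * μ (ball x r) ∧
      μ (ball x (2 * r)) < ⊤)
    (n' : ℝ) (hn'0 : 0 ≤ n') (C₁ : ℝ) (hC₁ : 0 < C₁)
    (hcomp : ∀ (x y : M) (r : ℝ), 0 < r →
      μ (ball x r) ≤ ENNReal.ofReal (C₁ * (1 + dist x y / r) ^ n') * μ (ball y r)) :
    ∀ σ : ℝ, n' / 2 < σ → ∃ C : ℝ, 0 < C ∧
      ∀ (t : ℝ), 0 < t → ∀ x y z : M, dist y z < dist x y / 2 →
        Dker μ t σ x z ≤ C * Dker μ t (σ - n' / 2) x y :=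
  fun σ _ ↦ ⟨C₁ ^ (1 / 2 : ℝ) * 2 ^ |σ|, by positivity, fun _t ht _x y z hyz ↦
    Dker_le_of_dist_lt_general ht hn'0 hC₁.le
      (fun w ↦ measure_ball_pos_and_lt_top_of_two_mul
        (fun r hr ↦ ⟨(hdoubling w r hr).1, (hdoubling w r hr).2.2⟩) ht)
      (hcomp y z _ ht) hyz.le σ⟩
end

section
/- Let (M, ρ, μ) be a metric measure space satisfying the doubling condition and the comparability property with exponent n' ∈ [0, ∞). Then for every σ ≥ n'/2 there is a constant C > 0 such that for all t > 0 and all x, y, z ∈ M with ρ(y,z) ≥ ρ(x,y)/2, one has D_{t,σ}(x,z) ≤ C ( μ(B(x,t)) μ(B(y,t)) )^{-1/2} (1 + ρ(x,y)/t)^{n'/2}. -/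
/-!
Write `V(w) = μ(B(w,t))`. Since `1 + ρ(y,z)/t ≤ (1 + ρ(x,y)/t)(1 + ρ(x,z)/t)`, comparability of
`V(y)` and `V(z)` trades `V(z)^{-1/2}` for `V(y)^{-1/2}` at the cost of `(1 + ρ(x,y)/t)^{n'/2}` and
`(1 + ρ(x,z)/t)^{n'/2}`; the decay `(1 + ρ(x,z)/t)^{-σ}` of the kernel absorbs the latter.
-/

open MeasureTheory Metric

lemma one_add_dist_div_le_mul {X : Type*} [PseudoMetricSpace X] {r : ℝ} (hr : 0 ≤ r) (x y z : X) :
    1 + dist x z / r ≤ (1 + dist x y / r) * (1 + dist y z / r) := by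
  have htri : dist x z / r ≤ dist x y / r + dist y z / r := by
    rw [← add_div]
    gcongr
    exact dist_triangle x y z
  have hprod : 0 ≤ dist x y / r * (dist y z / r) := by positivity
  linarith

lemma rpow_neg_le_mul_rpow_neg_of_le_mul {v w k p : ℝ} (hv : 0 < v) (hk : 0 < k) (hp : 0 ≤ p)
    (h : v ≤ k * w) : w ^ (-p) ≤ k ^ p * v ^ (-p) := by
  have hw : 0 < w := pos_of_mul_pos_right (hv.trans_le h) hk.le
  calc w ^ (-p) = k ^ p * (k * w) ^ (-p) := by
        rw [Real.mul_rpow hk.le hw.le, ← mul_assoc, ← Real.rpow_add hk, add_neg_cancel,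
          Real.rpow_zero, one_mul]
    _ ≤ k ^ p * v ^ (-p) := by
        gcongr ?_ * ?_
        exact Real.rpow_le_rpow_of_nonpos hv h (neg_nonpos.2 hp)

lemma mul_rpow_mul_rpow_neg_le {a b s σ : ℝ} (ha : 0 ≤ a) (hb : 1 ≤ b) (hs : s ≤ σ) :
    (a * b) ^ s * b ^ (-σ) ≤ a ^ s := by
  have hb₀ : 0 < b := one_pos.trans_le hb
  calc (a * b) ^ s * b ^ (-σ) = a ^ s * b ^ (s - σ) := by
        rw [Real.mul_rpow ha hb₀.le, mul_assoc, ← Real.rpow_add hb₀, sub_eq_add_neg]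
    _ ≤ a ^ s := mul_le_of_le_one_right (by positivity)
        (Real.rpow_le_one_of_one_le_of_nonpos hb (sub_nonpos.2 hs))

lemma toReal_rpow_neg_le_of_le_ofReal_mul {v w : ENNReal} {k p : ℝ} (hv : 0 < v) (hw : w < ⊤)
    (hk : 0 < k) (hp : 0 ≤ p) (h : v ≤ ENNReal.ofReal k * w) :
    w.toReal ^ (-p) ≤ k ^ p * v.toReal ^ (-p) := by
  have hkw : ENNReal.ofReal k * w < ⊤ := ENNReal.mul_lt_top ENNReal.ofReal_lt_top hw
  refine rpow_neg_le_mul_rpow_neg_of_le_mul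
    (ENNReal.toReal_pos hv.ne' (h.trans_lt hkw).ne) hk hp ?_
  simpa only [ENNReal.toReal_mul, ENNReal.toReal_ofReal hk.le] using
    ENNReal.toReal_mono hkw.ne h

lemma toReal_measure_ball_rpow_neg_mul_le {X : Type*} [PseudoMetricSpace X]
    [MeasurableSpace X] {μ : Measure X} {t σ n C p : ℝ} {x y z : X} (ht : 0 ≤ t) (hn : 0 ≤ n)
    (hC : 0 < C) (hp : 0 ≤ p) (hσ : n * p ≤ σ) (hy : 0 < μ (ball y t)) (hz : μ (ball z t) < ⊤)
    (hcomp : μ (ball y t) ≤ ENNReal.ofReal (C * (1 + dist y z / t) ^ n) * μ (ball z t)) :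
    (μ (ball z t)).toReal ^ (-p) * (1 + dist x z / t) ^ (-σ) ≤
      C ^ p * (μ (ball y t)).toReal ^ (-p) * (1 + dist x y / t) ^ (n * p) := by
  have htri : 1 + dist y z / t ≤ (1 + dist x y / t) * (1 + dist x z / t) := by
    simpa only [dist_comm y x] using one_add_dist_div_le_mul ht y x z
  have hxz : 1 ≤ 1 + dist x z / t := le_add_of_nonneg_right (by positivity)
  calc
    _ ≤ (C * (1 + dist y z / t) ^ n) ^ p * (μ (ball y t)).toReal ^ (-p) *
          (1 + dist x z / t) ^ (-σ) := by
        gcongr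
        exact toReal_rpow_neg_le_of_le_ofReal_mul hy hz (by positivity) hp hcomp
    _ = C ^ p * (μ (ball y t)).toReal ^ (-p) *
          ((1 + dist y z / t) ^ (n * p) * (1 + dist x z / t) ^ (-σ)) := by
        rw [Real.mul_rpow hC.le (by positivity), ← Real.rpow_mul (by positivity), mul_assoc,
          mul_mul_mul_comm]
    _ ≤ C ^ p * (μ (ball y t)).toReal ^ (-p) *
          (((1 + dist x y / t) * (1 + dist x z / t)) ^ (n * p) * (1 + dist x z / t) ^ (-σ)) := by
        gcongr
    _ ≤ _ := by
        gcongr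
        exact mul_rpow_mul_rpow_neg_le (by positivity) hxz hσ

theorem Dker_le_of_dist_ge_general {M : Type*} [MetricSpace M] [MeasurableSpace M] {μ : Measure M}
    {t σ n C : ℝ} (ht : 0 < t) (hn : 0 ≤ n) (hC : 0 < C) (hσ : n / 2 ≤ σ)
    (hball : ∀ x : M, 0 < μ (ball x t) ∧ μ (ball x t) < ⊤)
    (hcomp : ∀ x y : M,
      μ (ball x t) ≤ ENNReal.ofReal (C * (1 + dist x y / t) ^ n) * μ (ball y t))
    (x y z : M) :
    Dker μ t σ x z ≤
      C ^ (1 / 2 : ℝ) * ((μ (ball x t)).toReal * (μ (ball y t)).toReal) ^ (-(1 / 2 : ℝ)) *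
        (1 + dist x y / t) ^ (n / 2) := by
  rw [← mul_one_div n 2] at hσ ⊢
  have hyz := toReal_measure_ball_rpow_neg_mul_le (x := x) ht.le hn hC one_half_pos.le hσ
    (hball y).1 (hball z).2 (hcomp y z)
  rw [Dker, Real.mul_rpow ENNReal.toReal_nonneg ENNReal.toReal_nonneg,
    Real.mul_rpow ENNReal.toReal_nonneg ENNReal.toReal_nonneg]
  calc
    _ ≤ (μ (ball x t)).toReal ^ (-(1 / 2 : ℝ)) * (C ^ (1 / 2 : ℝ) *
          (μ (ball y t)).toReal ^ (-(1 / 2 : ℝ)) * (1 + dist x y / t) ^ (n * (1 / 2))) := by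
        rw [mul_assoc]
        gcongr
    _ = _ := by ring

/-- Under the doubling condition and the comparability property with exponent
`n' ≥ 0`, for every `σ ≥ n'/2` there is `C > 0` such that for all `t > 0` and all `x, y, z`
with `ρ(y,z) ≥ ρ(x,y)/2`, one has
`D_{t,σ}(x,z) ≤ C (μ(B(x,t)) μ(B(y,t)))^{-1/2} (1 + ρ(x,y)/t)^{n'/2}`. -/
theorem Dker_le_of_dist_ge
    {M : Type*} [MetricSpace M] [MeasurableSpace M] (μ : Measure M)
    (c₀ : ℝ) (hc₀ : 1 < c₀)
    (hdoubling : ∀ (x : M) (r : ℝ), 0 < r →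
      0 < μ (ball x (2 * r)) ∧
      μ (ball x (2 * r)) ≤ ENNReal.ofReal c₀ * μ (ball x r) ∧
      μ (ball x (2 * r)) < ⊤)
    (n' : ℝ) (hn'0 : 0 ≤ n') (C₁ : ℝ) (hC₁ : 0 < C₁)
    (hcomp : ∀ (x y : M) (r : ℝ), 0 < r →
      μ (ball x r) ≤ ENNReal.ofReal (C₁ * (1 + dist x y / r) ^ n') * μ (ball y r)) :
    ∀ σ : ℝ, n' / 2 ≤ σ → ∃ C : ℝ, 0 < C ∧
      ∀ (t : ℝ), 0 < t → ∀ x y z : M, dist x y / 2 ≤ dist y z →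
        Dker μ t σ x z ≤
          C * ((μ (ball x t)).toReal * (μ (ball y t)).toReal) ^ (-(1 / 2 : ℝ)) *
            (1 + dist x y / t) ^ (n' / 2) := by
  intro σ hσ
  have hball {t : ℝ} (ht : 0 < t) (w : M) : 0 < μ (ball w t) ∧ μ (ball w t) < ⊤ := by
    simpa only [mul_div_cancel₀ t two_ne_zero] using
      (hdoubling w (t / 2) (half_pos ht)).imp_right And.right
  exact ⟨C₁ ^ (1 / 2 : ℝ), by positivity, fun t ht x y z _ ↦
    Dker_le_of_dist_ge_general ht hn'0 hC₁ hσ (hball ht) (fun u v ↦ hcomp u v t ht) x y z⟩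
end

section
/- Let (M, ρ, μ) be a metric measure space satisfying the doubling condition, the strong homogeneity property with exponent n, and the comparability property with exponent n' ∈ [0, n]. Suppose σ > n + n'/2. Then there is a constant C > 0 such that for all x, y ∈ M and all 0 < s ≤ t < ρ(x,y), ∫_{{z ∈ M : ρ(z,y) ≥ ρ(x,y)/2}} D_{s,σ}(z,y) dμ(z) ≤ C (1 + ρ(x,y)/t)^{−σ + n + n'/2}. -/
/-!
Put `u(z) = 1 + ρ(z,y)/s`. Comparability trades `μ(B(z,s))` for `μ(B(y,s))` at the cost of a factor
`u(z)^(n'/2)`, so `D_{s,σ}(z,y)` is at most a constant times `u(z)^(n'/2-σ) / μ(B(y,s))`. Strong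
homogeneity bounds the measure of the shell `L ≤ u < 2L` by a multiple of `L^n μ(B(y,s))`; the shell
therefore contributes a multiple of `L^e` with `e = -σ + n + n'/2 < 0`. Summing over `L = 2^k R`,
`k ≥ 0`, bounds the integral over `{u ≥ R}` by a multiple of `R^e`. For `R = 1 + ρ(x,y)/(2s)` and
`s ≤ t` one has `R ≥ (1 + ρ(x,y)/t)/2`, which gives the claim.
-/

open MeasureTheory Metric

/-- Strong homogeneity of `μ` with exponent `n` and constant `C₀`: dilating a ball by `lam ≥ 1`
multiplies its measure by at most `C₀ lam ^ n`. -/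
def StronglyHomogeneousWith {M : Type*} [PseudoMetricSpace M] [MeasurableSpace M]
    (C₀ n : ℝ) (μ : Measure M) : Prop :=
  ∀ (x : M) (r lam : ℝ), 0 < r → 1 ≤ lam →
    μ (ball x (lam * r)) ≤ ENNReal.ofReal (C₀ * lam ^ n) * μ (ball x r)

/-- Comparability with exponent `n'` and constant `C₁` of the `μ`-measures of two balls of the same
radius, in terms of the distance of their centres relative to that radius. -/
def BallComparableWith {M : Type*} [PseudoMetricSpace M] [MeasurableSpace M]
    (C₁ n' : ℝ) (μ : Measure M) : Prop :=
  ∀ (x y : M) (r : ℝ), 0 < r →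
    μ (ball x r) ≤ ENNReal.ofReal (C₁ * (1 + dist x y / r) ^ n') * μ (ball y r)

section DyadicShells

lemma Ici_subset_iUnion_Ico_two_pow_mul {R : ℝ} (hR : 0 < R) :
    Set.Ici R ⊆ ⋃ k : ℕ, Set.Ico (2 ^ k * R) (2 * (2 ^ k * R)) := by
  intro u hu
  obtain ⟨k, hk_le, hk_lt⟩ :=
    exists_nat_pow_near ((one_le_div hR).2 (Set.mem_Ici.1 hu)) one_lt_two
  rw [le_div_iff₀ hR] at hk_le
  rw [div_lt_iff₀ hR, pow_succ', mul_assoc] at hk_lt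
  exact Set.mem_iUnion.2 ⟨k, hk_le, hk_lt⟩

lemma tsum_ofReal_mul_two_pow_mul_rpow {K R e : ℝ} (hK : 0 ≤ K) (hR : 0 ≤ R) (he : e < 0) :
    ∑' k : ℕ, ENNReal.ofReal (K * (2 ^ k * R) ^ e) =
      ENNReal.ofReal (K * (1 - 2 ^ e)⁻¹ * R ^ e) := by
  have ratio_nonneg : (0 : ℝ) ≤ 2 ^ e := by positivity
  have ratio_lt_one : (2 : ℝ) ^ e < 1 := Real.rpow_lt_one_of_one_lt_of_neg one_lt_two he
  have term_eq (k : ℕ) : K * (2 ^ k * R) ^ e = K * R ^ e * (2 ^ e) ^ k := by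
    rw [Real.mul_rpow (by positivity) hR, Real.rpow_pow_comm zero_le_two]
    ring
  simp only [term_eq]
  rw [← ENNReal.ofReal_tsum_of_nonneg (fun k => by positivity)
      ((summable_geometric_of_lt_one ratio_nonneg ratio_lt_one).mul_left _),
    tsum_mul_left, tsum_geometric_of_lt_one ratio_nonneg ratio_lt_one, mul_right_comm]

lemma setLIntegral_le_of_dyadic_shells {α : Type*} [MeasurableSpace α] {μ : Measure α}
    {u : α → ℝ} {g : α → ENNReal} {K R e : ℝ} (hK : 0 ≤ K) (hR : 0 < R) (he : e < 0)
    (hshell : ∀ L, R ≤ L → ∫⁻ z in u ⁻¹' Set.Ico L (2 * L), g z ∂μ ≤ ENNReal.ofReal (K * L ^ e)) :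
    ∫⁻ z in u ⁻¹' Set.Ici R, g z ∂μ ≤ ENNReal.ofReal (K * (1 - 2 ^ e)⁻¹ * R ^ e) := by
  have hcover : u ⁻¹' Set.Ici R ⊆ ⋃ k : ℕ, u ⁻¹' Set.Ico (2 ^ k * R) (2 * (2 ^ k * R)) := by
    rw [← Set.preimage_iUnion]
    exact Set.preimage_mono (Ici_subset_iUnion_Ico_two_pow_mul hR)
  calc ∫⁻ z in u ⁻¹' Set.Ici R, g z ∂μ
      ≤ ∫⁻ z in ⋃ k : ℕ, u ⁻¹' Set.Ico (2 ^ k * R) (2 * (2 ^ k * R)), g z ∂μ :=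
        lintegral_mono_set hcover
    _ ≤ ∑' k : ℕ, ∫⁻ z in u ⁻¹' Set.Ico (2 ^ k * R) (2 * (2 ^ k * R)), g z ∂μ :=
        lintegral_iUnion_le _ _
    _ ≤ ∑' k : ℕ, ENNReal.ofReal (K * (2 ^ k * R) ^ e) :=
        ENNReal.tsum_le_tsum fun k =>
          hshell _ (le_mul_of_one_le_left hR.le (one_le_pow₀ one_le_two))
    _ = ENNReal.ofReal (K * (1 - 2 ^ e)⁻¹ * R ^ e) := tsum_ofReal_mul_two_pow_mul_rpow hK hR.le he

end DyadicShells

lemma rpow_neg_half_mul_le {a b Q : ℝ} (hb : 0 < b) (hQ : 0 < Q) (h : b ≤ Q * a) :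
    (a * b) ^ (-(1 / 2 : ℝ)) ≤ Q ^ (1 / 2 : ℝ) / b := by
  have hab : b ^ 2 / Q ≤ a * b := by
    rw [div_le_iff₀ hQ]
    nlinarith
  calc (a * b) ^ (-(1 / 2 : ℝ)) ≤ (b ^ 2 / Q) ^ (-(1 / 2 : ℝ)) :=
        Real.rpow_le_rpow_of_nonpos (by positivity) hab (by norm_num)
    _ = Q ^ (1 / 2 : ℝ) / b := by
        rw [Real.rpow_neg (by positivity), Real.div_rpow (by positivity) hQ.le, inv_div,
          ← Real.sqrt_eq_rpow (b ^ 2), Real.sqrt_sq hb.le]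

section Kernel

variable {M : Type*} [MetricSpace M] [MeasurableSpace M] {μ : Measure M}
  {C₀ C₁ n n' σ s : ℝ} {y : M}

lemma Dker_le_of_ballComparableWith {z : M} (hC₁ : 0 < C₁) (hcomp : BallComparableWith C₁ n' μ)
    (hs : 0 < s) (hy_pos : 0 < μ (ball y s)) (hy_fin : μ (ball y s) < ⊤)
    (hz_fin : μ (ball z s) < ⊤) :
    Dker μ s σ z y ≤
      C₁ ^ (1 / 2 : ℝ) * (1 + dist z y / s) ^ (n' / 2 - σ) / μ.real (ball y s) := by
  have hb : 0 < μ.real (ball y s) := ENNReal.toReal_pos hy_pos.ne' hy_fin.ne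
  set u : ℝ := 1 + dist z y / s
  have hu : 0 < u := by positivity
  have hyz : μ.real (ball y s) ≤ C₁ * u ^ n' * μ.real (ball z s) := by
    have h := ENNReal.toReal_mono (ENNReal.mul_ne_top ENNReal.ofReal_ne_top hz_fin.ne)
      (hcomp y z s hs)
    rwa [dist_comm y z, ENNReal.toReal_mul, ENNReal.toReal_ofReal (by positivity)] at h
  calc Dker μ s σ z y
      ≤ (C₁ * u ^ n') ^ (1 / 2 : ℝ) / μ.real (ball y s) * u ^ (-σ) :=
        mul_le_mul_of_nonneg_right (rpow_neg_half_mul_le hb (by positivity) hyz) (by positivity)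
    _ = C₁ ^ (1 / 2 : ℝ) * u ^ (n' / 2 - σ) / μ.real (ball y s) := by
        rw [Real.mul_rpow hC₁.le (by positivity), ← Real.rpow_mul hu.le, mul_one_div,
          sub_eq_add_neg, Real.rpow_add hu]
        ring

lemma setLIntegral_Dker_shell_le {R L : ℝ} (hC₁ : 0 < C₁)
    (hpos : 0 < μ (ball y s)) (hfin : ∀ z, μ (ball z s) < ⊤)
    (hhom : StronglyHomogeneousWith C₀ n μ) (hcomp : BallComparableWith C₁ n' μ)
    (hσ : n' / 2 ≤ σ) (hs : 0 < s) (hR : 0 < R) (hL : 1 ≤ L) :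
    ∫⁻ z in (fun z => 1 + dist z y / s) ⁻¹' Set.Ico R L, ENNReal.ofReal (Dker μ s σ z y) ∂μ ≤
      ENNReal.ofReal (C₁ ^ (1 / 2 : ℝ) * R ^ (n' / 2 - σ) * (C₀ * L ^ n)) := by
  set shell : Set M := (fun z => 1 + dist z y / s) ⁻¹' Set.Ico R L
  set b : ℝ := μ.real (ball y s)
  have hb : 0 < b := ENNReal.toReal_pos hpos.ne' (hfin y).ne
  have hkernel : ∀ z ∈ shell, Dker μ s σ z y ≤ C₁ ^ (1 / 2 : ℝ) * R ^ (n' / 2 - σ) / b := by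
    intro z hz
    refine (Dker_le_of_ballComparableWith hC₁ hcomp hs hpos (hfin y) (hfin z)).trans ?_
    gcongr ?_ / b
    exact mul_le_mul_of_nonneg_left
      (Real.rpow_le_rpow_of_nonpos hR hz.1 (by linarith)) (by positivity)
  have hsub : shell ⊆ ball y (L * s) := fun z hz =>
    (div_lt_iff₀ hs).1 ((lt_one_add _).trans hz.2)
  calc ∫⁻ z in shell, ENNReal.ofReal (Dker μ s σ z y) ∂μ
      ≤ ∫⁻ _ in shell, ENNReal.ofReal (C₁ ^ (1 / 2 : ℝ) * R ^ (n' / 2 - σ) / b) ∂μ :=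
        setLIntegral_mono measurable_const fun z hz => ENNReal.ofReal_le_ofReal (hkernel z hz)
    _ ≤ ENNReal.ofReal (C₁ ^ (1 / 2 : ℝ) * R ^ (n' / 2 - σ) / b) *
          (ENNReal.ofReal (C₀ * L ^ n) * ENNReal.ofReal b) := by
        rw [setLIntegral_const, ofReal_measureReal (hfin y).ne]
        gcongr
        exact (measure_mono hsub).trans (hhom y s L hs hL)
    _ = ENNReal.ofReal (C₁ ^ (1 / 2 : ℝ) * R ^ (n' / 2 - σ) * (C₀ * L ^ n)) := by
        rw [← ENNReal.ofReal_mul' hb.le, ← ENNReal.ofReal_mul (by positivity)]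
        congr 1
        field_simp

lemma setLIntegral_Dker_compl_ball_le {r : ℝ} (hC₀ : 0 ≤ C₀) (hC₁ : 0 < C₁)
    (hpos : 0 < μ (ball y s)) (hfin : ∀ z, μ (ball z s) < ⊤)
    (hhom : StronglyHomogeneousWith C₀ n μ) (hcomp : BallComparableWith C₁ n' μ)
    (hn : 0 ≤ n) (hσ : n + n' / 2 < σ) (hs : 0 < s) (hr : 0 ≤ r) :
    ∫⁻ z in (ball y r)ᶜ, ENNReal.ofReal (Dker μ s σ z y) ∂μ ≤
      ENNReal.ofReal (C₁ ^ (1 / 2 : ℝ) * (C₀ * 2 ^ n) * (1 - 2 ^ (-σ + n + n' / 2))⁻¹ *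
        (1 + r / s) ^ (-σ + n + n' / 2)) := by
  have hset : (ball y r)ᶜ = (fun z => 1 + dist z y / s) ⁻¹' Set.Ici (1 + r / s) := by
    ext z
    simp only [Set.mem_compl_iff, mem_ball, not_lt, Set.mem_preimage, Set.mem_Ici,
      add_le_add_iff_left, div_le_div_iff_of_pos_right hs]
  rw [hset]
  refine setLIntegral_le_of_dyadic_shells (by positivity) (by positivity) (by linarith)
    fun L hL => ?_
  have hL1 : 1 ≤ L := (le_add_of_nonneg_right (by positivity)).trans hL
  have hL0 : 0 < L := by linarith
  refine (setLIntegral_Dker_shell_le hC₁ hpos hfin hhom hcomp (by linarith) hs hL0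
    (by linarith)).trans_eq ?_
  rw [Real.mul_rpow zero_le_two hL0.le,
    show -σ + n + n' / 2 = n' / 2 - σ + n by ring, Real.rpow_add hL0]
  congr 1
  ring

end Kernel

lemma one_add_half_div_rpow_le {d s t e : ℝ} (hd : 0 ≤ d) (hs : 0 < s) (hst : s ≤ t)
    (he : e ≤ 0) : (1 + d / 2 / s) ^ e ≤ 2 ^ (-e) * (1 + d / t) ^ e := by
  have ht : 0 < t := hs.trans_le hst
  have hdiv : d / t ≤ d / s := by gcongr
  calc (1 + d / 2 / s) ^ e ≤ ((1 + d / t) / 2) ^ e :=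
        Real.rpow_le_rpow_of_nonpos (by positivity) (by rw [div_right_comm]; linarith) he
    _ = 2 ^ (-e) * (1 + d / t) ^ e := by
        rw [Real.div_rpow (by positivity) zero_le_two, Real.rpow_neg zero_le_two]
        ring

theorem integral_Dker_far_le_general
    {M : Type*} [MetricSpace M] [MeasurableSpace M] {μ : Measure M} {C₀ C₁ n n' σ : ℝ}
    (hball : ∀ (x : M) (r : ℝ), 0 < r → 0 < μ (ball x r) ∧ μ (ball x r) < ⊤)
    (hn : 0 ≤ n) (hC₀ : 0 < C₀) (hhom : StronglyHomogeneousWith C₀ n μ)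
    (hC₁ : 0 < C₁) (hcomp : BallComparableWith C₁ n' μ) (hσ : n + n' / 2 < σ) :
    ∃ C : ℝ, 0 < C ∧ ∀ (x y : M) (s t : ℝ), 0 < s → s ≤ t →
      ∫⁻ z in {z : M | dist x y / 2 ≤ dist z y}, ENNReal.ofReal (Dker μ s σ z y) ∂μ ≤
        ENNReal.ofReal (C * (1 + dist x y / t) ^ (-σ + n + n' / 2)) := by
  set e : ℝ := -σ + n + n' / 2
  have he : e < 0 := by simp only [e]; linarith
  have hgap : 0 < 1 - (2 : ℝ) ^ e :=
    sub_pos.2 (Real.rpow_lt_one_of_one_lt_of_neg one_lt_two he)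
  set K : ℝ := C₁ ^ (1 / 2 : ℝ) * (C₀ * 2 ^ n) * (1 - 2 ^ e)⁻¹
  have hK : 0 < K := by positivity
  refine ⟨K * 2 ^ (-e), by positivity, fun x y s t hs hst => ?_⟩
  have hset : {z : M | dist x y / 2 ≤ dist z y} = (ball y (dist x y / 2))ᶜ := by
    ext z
    simp
  rw [hset]
  refine (setLIntegral_Dker_compl_ball_le hC₀.le hC₁ (hball y s hs).1 (fun z => (hball z s hs).2)
    hhom hcomp hn hσ hs (by positivity)).trans (ENNReal.ofReal_le_ofReal ?_)
  rw [mul_assoc K]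
  exact mul_le_mul_of_nonneg_left (one_add_half_div_rpow_le dist_nonneg hs hst he.le) hK.le

/-- Under the doubling condition, the strong homogeneity property with exponent
`n`, and the comparability property with exponent `n' ∈ [0,n]`, if `σ > n + n'/2` then there is
`C > 0` such that for all `x, y ∈ M` and all `0 < s ≤ t < ρ(x,y)`,
`∫_{{z : ρ(z,y) ≥ ρ(x,y)/2}} D_{s,σ}(z,y) dμ(z) ≤ C (1 + ρ(x,y)/t)^{-σ + n + n'/2}`. -/
theorem integral_Dker_far_le
    {M : Type*} [MetricSpace M] [MeasurableSpace M] (μ : Measure M)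
    (c₀ : ℝ) (hc₀ : 1 < c₀)
    (hdoubling : ∀ (x : M) (r : ℝ), 0 < r →
      0 < μ (ball x (2 * r)) ∧
      μ (ball x (2 * r)) ≤ ENNReal.ofReal c₀ * μ (ball x r) ∧
      μ (ball x (2 * r)) < ⊤)
    (n : ℝ) (hn : 0 < n) (C₀ : ℝ) (hC₀ : 0 < C₀)
    (hhom : ∀ (x : M) (r lam : ℝ), 0 < r → 1 ≤ lam →
      μ (ball x (lam * r)) ≤ ENNReal.ofReal (C₀ * lam ^ n) * μ (ball x r))
    (n' : ℝ) (hn'0 : 0 ≤ n') (hn'n : n' ≤ n) (C₁ : ℝ) (hC₁ : 0 < C₁)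
    (hcomp : ∀ (x y : M) (r : ℝ), 0 < r →
      μ (ball x r) ≤ ENNReal.ofReal (C₁ * (1 + dist x y / r) ^ n') * μ (ball y r))
    (σ : ℝ) (hσ : n + n' / 2 < σ) :
    ∃ C : ℝ, 0 < C ∧ ∀ (x y : M) (s t : ℝ), 0 < s → s ≤ t → t < dist x y →
      ∫⁻ z in {z : M | dist x y / 2 ≤ dist z y}, ENNReal.ofReal (Dker μ s σ z y) ∂μ ≤
        ENNReal.ofReal (C * (1 + dist x y / t) ^ (-σ + n + n' / 2)) := by
  have hball (x : M) (r : ℝ) (hr : 0 < r) : 0 < μ (ball x r) ∧ μ (ball x r) < ⊤ := by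
    simpa only [mul_div_cancel₀ r two_ne_zero] using
      And.imp_right And.right (hdoubling x (r / 2) (half_pos hr))
  obtain ⟨C, hC, hbound⟩ := integral_Dker_far_le_general hball hn.le hC₀ hhom hC₁ hcomp hσ
  exact ⟨C, hC, fun x y s t hs hst _ => hbound x y s t hs hst⟩
end

section
/- Let (M, ρ, μ) be a metric measure space whose Borel measure satisfies the doubling condition. Suppose 1 < p < ∞ and 1 < q ≤ ∞. Then there exists a constant C > 0 such that for every sequence {f_j}_{j=1}^∞ of measurable functions on M, ‖ ( Σ_j (𝓜f_j)^q )^{1/q} ‖_{L^p(μ)} ≤ C ‖ ( Σ_j |f_j|^q )^{1/q} ‖_{L^p(μ)} (with the usual modification, sup over j, when q = ∞), where 𝓜f(x) := sup_{B ∋ x} μ(B)^{-1} ∫_B |f(y)| dμ(y) is the Hardy–Littlewood maximal function (the supremum ranging over all open balls B containing x). -/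
/-!
The scalar inequality goes from the Vitali covering lemma through the weak type `(1,1)` bound to
`L^q`. For a weight `w` with `𝓜w ≤ A w`, the measure `w dμ` is again doubling, and its maximal
function `𝓜_w` satisfies `𝓜f ≤ A w ^ b 𝓜_w (f w ^ (-b))` for `0 ≤ b ≤ 1`; hence `𝓜` is bounded on
`L^q(w ^ σ)` for `1 - q ≤ σ ≤ 1`. On such a space the `ℓ^q`-valued inequality is a sum of scalar
ones.

To pass from `L^q` to `L^p`, extrapolate: the Rubio de Francia series `∑ c ^ k 𝓜 ^ k F` majorizes
`F ∈ L^s`, `s > 1`, by an `A₁` weight of comparable norm. For `p > q` use `σ = 1` and a majorant of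
a function dual to `(∑ (𝓜f_j) ^ q) ^ (p / q)`; for `p < q` use `σ = 1 - q` and a majorant of a power
of `∑ |f_j| ^ q`. When `q = ∞`, `sup_j 𝓜f_j ≤ 𝓜(sup_j |f_j|)` suffices.
-/

open MeasureTheory Metric ENNReal

/-- The `L^p(μ)` quasi-norm (`0 < p ≤ ∞`) of an `ℝ≥0∞`-valued function, with the essential
supremum when `p = ∞`. -/
noncomputable def pNorm {M : Type*} [MeasurableSpace M] (μ : Measure M) (p : ℝ≥0∞)
    (h : M → ℝ≥0∞) : ℝ≥0∞ :=
  if p = ∞ then essSup h μ else (∫⁻ x, h x ^ p.toReal ∂μ) ^ (1 / p.toReal)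

/-- The `ℓ^q` quasi-norm (`1 < q ≤ ∞`) of a sequence in `ℝ≥0∞`, with the supremum
when `q = ∞` (the "usual modification"). -/
noncomputable def qSum (q : ℝ≥0∞) (g : ℕ → ℝ≥0∞) : ℝ≥0∞ :=
  if q = ∞ then ⨆ j, g j else (∑' j, g j ^ q.toReal) ^ (1 / q.toReal)

namespace FeffermanStein

open Set
open scoped NNReal

/-! ### Exponents -/

section Exponents

theorem rpow_sub_one_mul_self (a : ℝ≥0∞) {q : ℝ} (hq : 1 ≤ q) : a ^ (q - 1) * a = a ^ q := by
  conv_rhs => rw [← sub_add_cancel q 1, rpow_add_of_nonneg _ _ (sub_nonneg.2 hq) zero_le_one,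
    rpow_one]

theorem le_rpow_mul_rpow {a b c : ℝ≥0∞} {θ : ℝ} (hθ0 : 0 ≤ θ) (hθ1 : θ ≤ 1) (ha : c ≤ a)
    (hb : c ≤ b) : c ≤ a ^ (1 - θ) * b ^ θ := by
  have hθ : 0 ≤ 1 - θ := sub_nonneg.2 hθ1
  calc c = c ^ (1 - θ) * c ^ θ := by
        rw [← rpow_add_of_nonneg _ _ hθ hθ0, sub_add_cancel, rpow_one]
    _ ≤ a ^ (1 - θ) * b ^ θ := by gcongr

theorem tsum_pow_le_two {c : ℝ≥0} (hc : c ≤ 2⁻¹) : ∑' k : ℕ, (c : ℝ≥0∞) ^ k ≤ 2 :=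
  calc ∑' k : ℕ, (c : ℝ≥0∞) ^ k ≤ ∑' k : ℕ, 2⁻¹ ^ k := by
        gcongr
        simpa using coe_le_coe.2 hc
    _ = 2 := by rw [ENNReal.tsum_geometric, one_sub_inv_two, inv_inv]

theorem tsum_mul_rpow_le {ι : Type*} (c a : ι → ℝ≥0∞) {s : ℝ} (hs : 1 ≤ s) :
    (∑' k, c k * a k) ^ s ≤ (∑' k, c k) ^ (s - 1) * ∑' k, c k * a k ^ s := by
  have hs0 : 0 < s := by linarith
  have hroot : ∑' k, c k * a k ≤ (∑' k, c k) ^ (1 - s⁻¹) * (∑' k, c k * a k ^ s) ^ s⁻¹ := by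
    rw [ENNReal.tsum_eq_iSup_sum]
    refine iSup_le fun t => (inner_le_weight_mul_Lp_of_nonneg t hs c a).trans ?_
    gcongr
    · exact sub_nonneg.2 (inv_le_one_of_one_le₀ hs)
    · exact ENNReal.sum_le_tsum t
    · exact ENNReal.sum_le_tsum t
  calc (∑' k, c k * a k) ^ s
      ≤ ((∑' k, c k) ^ (1 - s⁻¹) * (∑' k, c k * a k ^ s) ^ s⁻¹) ^ s := by gcongr
    _ = (∑' k, c k) ^ (s - 1) * ∑' k, c k * a k ^ s := by
        rw [mul_rpow_of_nonneg _ _ hs0.le, ← rpow_mul, ← rpow_mul, sub_mul, one_mul,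
          inv_mul_cancel₀ hs0.ne', rpow_one]

theorem le_rpow_of_le_mul_rpow {r s : ℝ} (hrs : r.HolderConjugate s) {a b : ℝ≥0∞} (ha : a ≠ ∞)
    (h : a ≤ b * a ^ s⁻¹) : a ≤ b ^ r := by
  rcases eq_or_ne a 0 with rfl | ha0
  · exact zero_le
  have hsplit : a = a ^ r⁻¹ * a ^ s⁻¹ := by
    rw [← rpow_add _ _ ha0 ha, hrs.inv_add_inv_eq_one, rpow_one]
  have hroot : a ^ r⁻¹ ≤ b :=
    (ENNReal.mul_le_mul_iff_left (rpow_pos ha0.bot_lt ha).ne'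
      (rpow_ne_top_of_nonneg hrs.symm.inv_nonneg ha)).1 (hsplit.symm.trans_le h)
  exact (rpow_inv_le_iff hrs.pos).1 hroot

theorem mul_rpow_neg_le_rpow {a b : ℝ≥0∞} {r t : ℝ} (ht : 0 < t) (hr : r < 1)
    (h : a ^ ((1 - r) / t) ≤ b) : a * b ^ (-t) ≤ a ^ r := by
  have hb : b ^ (-t) ≤ a ^ (r - 1) := by
    calc b ^ (-t) ≤ (a ^ ((1 - r) / t)) ^ (-t) := by
          rw [rpow_neg, rpow_neg, ENNReal.inv_le_inv]
          gcongr
      _ = a ^ (r - 1) := by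
          rw [← rpow_mul]
          congr 1
          field_simp
          ring
  refine (mul_le_mul_right hb a).trans ?_
  rcases eq_or_ne a 0 with rfl | ha0
  · simp
  rcases eq_or_ne a ∞ with rfl | ha
  · simp [top_rpow_of_neg (sub_neg.2 hr)]
  · rw [rpow_sub _ _ ha0 ha, rpow_one, ENNReal.mul_div_cancel ha0 ha]

end Exponents

/-! ### Layer cake -/

section LayerCake

variable {α : Type*} [MeasurableSpace α] {ν : Measure α}

theorem lintegral_Ioi_ofReal_rpow (s : ℝ) : ∫⁻ t in Ioi (0 : ℝ), ENNReal.ofReal (t ^ s) = ∞ := by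
  by_contra h
  refine not_integrableOn_Ioi_rpow s ((lintegral_ofReal_ne_top_iff_integrable
    (by fun_prop) ?_).1 h)
  exact (ae_restrict_mem measurableSet_Ioi).mono fun t ht => Real.rpow_nonneg (mem_Ioi.1 ht).le s

theorem lintegral_ennreal_rpow_eq_lintegral_meas_lt_mul {f : α → ℝ≥0∞} (hf : AEMeasurable f ν)
    {s : ℝ} (hs : 0 < s) :
    ∫⁻ x, f x ^ s ∂ν = ENNReal.ofReal s *
      ∫⁻ t in Ioi (0 : ℝ), ν {x | ENNReal.ofReal t < f x} * ENNReal.ofReal (t ^ (s - 1)) := by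
  by_cases hfin : ∀ᵐ x ∂ν, f x ≠ ∞
  · have hreal := lintegral_rpow_eq_lintegral_meas_lt_mul ν
      (.of_forall fun x => toReal_nonneg (a := f x)) hf.ennreal_toReal hs
    convert hreal using 1
    · refine lintegral_congr_ae (hfin.mono fun x hx => ?_)
      simp only [← ofReal_rpow_of_nonneg toReal_nonneg hs.le, ofReal_toReal hx]
    · congr 1
      refine setLIntegral_congr_fun measurableSet_Ioi fun t ht => ?_
      congr 1
      refine measure_congr (hfin.mono fun x hx => propext ?_)
      exact ofReal_lt_iff_lt_toReal (mem_Ioi.1 ht).le hx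
  · have htop : ν {x | f x = ∞} ≠ 0 := by simpa [ae_iff] using hfin
    have hlhs : ∫⁻ x, f x ^ s ∂ν = ∞ := by
      by_contra h
      refine hfin ((ae_lt_top' (hf.pow_const s) h).mono fun x hx hfx => ?_)
      simp [hfx, hs] at hx
    have hrhs : ν {x | f x = ∞} * ∞ ≤
        ∫⁻ t in Ioi (0 : ℝ), ν {x | ENNReal.ofReal t < f x} * ENNReal.ofReal (t ^ (s - 1)) := by
      calc ν {x | f x = ∞} * ∞
          = ∫⁻ t in Ioi (0 : ℝ), ν {x | f x = ∞} * ENNReal.ofReal (t ^ (s - 1)) := by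
            rw [lintegral_const_mul _ (by fun_prop), lintegral_Ioi_ofReal_rpow]
        _ ≤ _ := by
            gcongr with t x
            exact fun hx => hx ▸ ofReal_lt_top
    rw [mul_top htop, top_le_iff] at hrhs
    rw [hlhs, hrhs, mul_top (by simpa using hs)]

-- Integrated against `a ^ (q - 2) da`, the hypothesis compares the layer-cake formula for `g` with
-- respect to `ν` and the one for `h` with respect to `f dν`.
theorem lintegral_rpow_le_of_mul_meas_lt_le {f g h : α → ℝ≥0∞} (hf : AEMeasurable f ν)
    (hg : AEMeasurable g ν) (hh : AEMeasurable h ν) {q : ℝ} (hq : 1 < q) {C : ℝ≥0}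
    (H : ∀ a : ℝ≥0∞, a * ν {x | a < g x} ≤ C * ∫⁻ x in {x | a < h x}, f x ∂ν) :
    ∫⁻ x, g x ^ q ∂ν ≤
      C * ENNReal.ofReal (q / (q - 1)) * ∫⁻ x, h x ^ (q - 1) * f x ∂ν := by
  have hq1 : 0 < q - 1 := sub_pos.2 hq
  have hh' : AEMeasurable h (ν.withDensity f) := hh.mono_ac (withDensity_absolutelyContinuous ν f)
  have hcake : ∫⁻ x, h x ^ (q - 1) * f x ∂ν = ENNReal.ofReal (q - 1) * ∫⁻ t in Ioi (0 : ℝ),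
      ν.withDensity f {x | ENNReal.ofReal t < h x} * ENNReal.ofReal (t ^ (q - 1 - 1)) := by
    rw [← lintegral_ennreal_rpow_eq_lintegral_meas_lt_mul hh' hq1,
      lintegral_withDensity_eq_lintegral_mul₀ hf (hh.pow_const _)]
    simp only [Pi.mul_apply, mul_comm (f _)]
  have hlevel : ∀ t ∈ Ioi (0 : ℝ),
      ν {x | ENNReal.ofReal t < g x} * ENNReal.ofReal (t ^ (q - 1)) ≤
        C * (ν.withDensity f {x | ENNReal.ofReal t < h x} * ENNReal.ofReal (t ^ (q - 1 - 1))) := by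
    intro t (ht : 0 < t)
    have hpow : t ^ (q - 1) = t * t ^ (q - 1 - 1) := by
      rw [Real.rpow_sub_one ht.ne' (q - 1), mul_div_cancel₀ _ ht.ne']
    rw [hpow, ofReal_mul ht.le, ← mul_assoc, ← mul_assoc, mul_comm (ν _),
      withDensity_apply₀ _ (nullMeasurableSet_lt aemeasurable_const hh)]
    exact mul_le_mul_left (H _) _
  have hconst : ENNReal.ofReal q = ENNReal.ofReal (q / (q - 1)) * ENNReal.ofReal (q - 1) := by
    rw [← ofReal_mul (by positivity), div_mul_cancel₀ _ hq1.ne']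
  calc ∫⁻ x, g x ^ q ∂ν
      = ENNReal.ofReal q * ∫⁻ t in Ioi (0 : ℝ),
          ν {x | ENNReal.ofReal t < g x} * ENNReal.ofReal (t ^ (q - 1)) :=
        lintegral_ennreal_rpow_eq_lintegral_meas_lt_mul hg (by linarith)
    _ ≤ ENNReal.ofReal q * (C * ∫⁻ t in Ioi (0 : ℝ),
          ν.withDensity f {x | ENNReal.ofReal t < h x} * ENNReal.ofReal (t ^ (q - 1 - 1))) := by
        rw [← lintegral_const_mul' _ _ coe_ne_top]
        gcongr ENNReal.ofReal q * ?_
        exact setLIntegral_mono' measurableSet_Ioi hlevel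
    _ = _ := by rw [hcake, hconst]; ring

end LayerCake

/-! ### The maximal function -/

section MaximalFunction

variable {M : Type*} [PseudoMetricSpace M] [MeasurableSpace M] {ν : Measure M}

/-- The uncentred maximal function of an `ℝ≥0∞`-valued function with respect to `ν`. Allowing the
value `∞` makes it possible to iterate the operator and to apply it to suprema and infinite sums. -/
noncomputable def maximalFn (ν : Measure M) (f : M → ℝ≥0∞) (x : M) : ℝ≥0∞ :=
  ⨆ (z : M) (r : ℝ) (_ : x ∈ ball z r), (ν (ball z r))⁻¹ * ∫⁻ y in ball z r, f y ∂ν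

variable {f g : M → ℝ≥0∞} {x z : M} {r : ℝ}

theorem average_le_maximalFn (hx : x ∈ ball z r) :
    (ν (ball z r))⁻¹ * ∫⁻ y in ball z r, f y ∂ν ≤ maximalFn ν f x :=
  le_iSup₂_of_le z r (le_iSup_of_le hx le_rfl)

theorem maximalFn_le {a : ℝ≥0∞}
    (h : ∀ z r, x ∈ ball z r → (ν (ball z r))⁻¹ * ∫⁻ y in ball z r, f y ∂ν ≤ a) :
    maximalFn ν f x ≤ a :=
  iSup₂_le fun z r => iSup_le fun hx => h z r hx

theorem maximalFn_mono (h : f ≤ g) (x : M) : maximalFn ν f x ≤ maximalFn ν g x :=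
  maximalFn_le fun _ _ hx => (mul_le_mul_right (lintegral_mono h) _).trans (average_le_maximalFn hx)

theorem iSup_maximalFn_le {ι : Sort*} (f : ι → M → ℝ≥0∞) (x : M) :
    ⨆ j, maximalFn ν (f j) x ≤ maximalFn ν (fun y => ⨆ j, f j y) x :=
  iSup_le fun j => maximalFn_mono (fun y => le_iSup (f · y) j) x

theorem maximalFn_const_le (c : ℝ≥0∞) (x : M) : maximalFn ν (fun _ => c) x ≤ c :=
  maximalFn_le fun z r _ => by
    rw [setLIntegral_const, mul_left_comm]
    exact mul_le_of_le_one_right' (ENNReal.inv_mul_le_one _)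

theorem maximalFn_add_const_le (f : M → ℝ≥0∞) (c : ℝ≥0∞) (x : M) :
    maximalFn ν (fun y => f y + c) x ≤ maximalFn ν f x + c := by
  refine maximalFn_le fun z r hx => ?_
  rw [lintegral_add_right _ measurable_const, mul_add]
  exact add_le_add (average_le_maximalFn hx)
    ((average_le_maximalFn hx).trans (maximalFn_const_le c x))

theorem maximalFn_tsum_le {ι : Type*} [Countable ι] (c : ι → ℝ≥0∞) {f : ι → M → ℝ≥0∞}
    (hf : ∀ k, AEMeasurable (f k) ν) (x : M) :
    maximalFn ν (fun y => ∑' k, c k * f k y) x ≤ ∑' k, c k * maximalFn ν (f k) x := by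
  refine maximalFn_le fun z r hx => ?_
  rw [lintegral_tsum fun k => ((hf k).restrict.const_mul _), ← ENNReal.tsum_mul_left]
  refine ENNReal.tsum_le_tsum fun k => ?_
  rw [lintegral_const_mul'' _ (hf k).restrict, mul_left_comm]
  gcongr
  exact average_le_maximalFn hx

theorem setOf_lt_maximalFn (ν : Measure M) (f : M → ℝ≥0∞) (a : ℝ≥0∞) :
    {x | a < maximalFn ν f x} = ⋃ (z : M) (r : ℝ)
      (_ : a < (ν (ball z r))⁻¹ * ∫⁻ y in ball z r, f y ∂ν), ball z r := by
  ext x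
  simp only [maximalFn, mem_ofPred_eq, lt_iSup_iff, mem_iUnion, exists_prop, and_comm]

theorem maximalFn_ne_zero (hν : ∀ (z : M) (r : ℝ), ν (ball z r) ≠ ∞) (hf : AEMeasurable f ν)
    (hf0 : ¬ f =ᵐ[ν] 0) (x : M) : maximalFn ν f x ≠ 0 := by
  contrapose hf0
  have hball : ∀ n : ℕ, ∀ᵐ y ∂ν.restrict (ball x (n + 1)), f y = 0 := fun n => by
    have havg := average_le_maximalFn (ν := ν) (f := f) (mem_ball_self (x := x) n.cast_add_one_pos)
    rw [hf0, nonpos_iff_eq_zero, mul_eq_zero, ENNReal.inv_eq_zero] at havg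
    exact (lintegral_eq_zero_iff' hf.restrict).1 (havg.resolve_left (hν _ _))
  have hcover : ⋃ n : ℕ, ball x (n + 1 : ℝ) = univ :=
    eq_univ_of_forall fun y => mem_iUnion.2 <|
      (exists_nat_gt (dist y x)).imp fun n hn => mem_ball.2 (hn.trans (lt_add_one _))
  rw [← Measure.restrict_univ (μ := ν), ← hcover]
  exact (ae_restrict_iUnion_iff _ _).2 hball

theorem measurable_maximalFn [OpensMeasurableSpace M] (ν : Measure M) (f : M → ℝ≥0∞) :
    Measurable (maximalFn ν f) := by
  refine measurable_of_Ioi fun a => IsOpen.measurableSet ?_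
  change IsOpen {x | a < maximalFn ν f x}
  rw [setOf_lt_maximalFn]
  exact isOpen_iUnion fun z => isOpen_iUnion fun r => isOpen_iUnion fun _ => isOpen_ball

end MaximalFunction

/-! ### Doubling measures -/

section Doubling

variable {M : Type*} [PseudoMetricSpace M] [MeasurableSpace M] {ν : Measure M} {K : ℝ≥0}

/-- The measure `ν` is doubling with constant `K`: balls have positive finite measure, and doubling
the radius multiplies the measure by at most `K`. -/
structure IsDoubling (ν : Measure M) (K : ℝ≥0) : Prop where
  measure_ball_ne_zero (x : M) {r : ℝ} (hr : 0 < r) : ν (ball x r) ≠ 0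
  measure_ball_ne_top (x : M) (r : ℝ) : ν (ball x r) ≠ ∞
  measure_ball_two_mul_le (x : M) {r : ℝ} (hr : 0 < r) : ν (ball x (2 * r)) ≤ K * ν (ball x r)

theorem IsDoubling.of_measure_ball_two_mul {c : ℝ≥0} (h : ∀ (x : M) (r : ℝ), 0 < r →
    0 < ν (ball x (2 * r)) ∧ ν (ball x (2 * r)) ≤ c * ν (ball x r) ∧ ν (ball x (2 * r)) < ∞) :
    IsDoubling ν c where
  measure_ball_ne_zero x r hr := by
    simpa [mul_div_cancel₀] using (h x (r / 2) (half_pos hr)).1.ne'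
  measure_ball_ne_top x r := ne_top_of_le_ne_top (h x (max r 1) (by positivity)).2.2.ne
    (measure_mono (ball_subset_ball (by linarith [le_max_left r 1, le_max_right r 1])))
  measure_ball_two_mul_le x r hr := (h x r hr).2.1

theorem IsDoubling.sigmaFinite (hν : IsDoubling ν K) : SigmaFinite ν := by
  rcases isEmpty_or_nonempty M with hM | ⟨⟨x⟩⟩
  · rw [ν.eq_zero_of_isEmpty]
    infer_instance
  · exact ⟨⟨{ set := fun n => ball x n
              set_mem := fun _ => trivial
              finite := fun n => (hν.measure_ball_ne_top x n).lt_top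
              spanning := iUnion_ball_nat x }⟩⟩

theorem IsDoubling.measure_ball_four_mul_le (hν : IsDoubling ν K) (x : M) {r : ℝ} (hr : 0 < r) :
    ν (ball x (4 * r)) ≤ K ^ 2 * ν (ball x r) := by
  calc ν (ball x (4 * r)) = ν (ball x (2 * (2 * r))) := by ring_nf
    _ ≤ K * (K * ν (ball x r)) :=
      (hν.measure_ball_two_mul_le x (by positivity)).trans
        (mul_le_mul_right (hν.measure_ball_two_mul_le x hr) _)
    _ = K ^ 2 * ν (ball x r) := by ring

theorem IsDoubling.mul_measure_ball_le (hν : IsDoubling ν K) {f : M → ℝ≥0∞} {a : ℝ≥0∞} {z : M}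
    {r : ℝ} (ha : a ≤ (ν (ball z r))⁻¹ * ∫⁻ y in ball z r, f y ∂ν) (hr : 0 < r) :
    a * ν (ball z r) ≤ ∫⁻ y in ball z r, f y ∂ν := by
  rwa [← ENNReal.le_div_iff_mul_le (.inl (hν.measure_ball_ne_zero z hr))
    (.inl (hν.measure_ball_ne_top z r)), ENNReal.div_eq_inv_mul]

variable [OpensMeasurableSpace M]

theorem IsDoubling.countable_of_pairwiseDisjoint_ball (hν : IsDoubling ν K) {u : Set (M × ℝ)}
    (hpos : ∀ b ∈ u, 0 < b.2) (hdisj : u.PairwiseDisjoint fun b => ball b.1 b.2) :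
    u.Countable := by
  have := hν.sigmaFinite
  have hcount := ν.countable_meas_pos_of_disjoint_iUnion (As := fun b : u => ball b.1.1 b.1.2)
    (fun _ => measurableSet_ball) fun b c hbc => hdisj b.2 c.2 (Subtype.coe_ne_coe.2 hbc)
  have huniv : {b : u | 0 < ν (ball b.1.1 b.1.2)} = univ :=
    eq_univ_of_forall fun b =>
      pos_iff_ne_zero.2 (hν.measure_ball_ne_zero b.1.1 (hpos b b.2))
  rwa [huniv, countable_univ_iff, countable_coe_iff] at hcount

-- Enlarging by `4 = 2 ^ 2` in the Vitali covering lemma costs two applications of doubling.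
theorem IsDoubling.exists_disjoint_subfamily_measure_le (hν : IsDoubling ν K) {T : Set (M × ℝ)}
    {R : ℝ} (hpos : ∀ b ∈ T, 0 < b.2) (hR : ∀ b ∈ T, b.2 ≤ R) :
    ∃ u ⊆ T, u.Countable ∧ u.PairwiseDisjoint (fun b => ball b.1 b.2) ∧
      ν (⋃ b ∈ T, ball b.1 b.2) ≤ K ^ 2 * ∑' b : u, ν (ball b.1.1 b.1.2) := by
  obtain ⟨u, huT, hdisj, hcov⟩ := Vitali.exists_disjoint_subfamily_covering_enlargement_ball
    T Prod.fst Prod.snd R hR 4 (by norm_num)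
  have hcount := hν.countable_of_pairwiseDisjoint_ball (fun b hb => hpos b (huT hb)) hdisj
  refine ⟨u, huT, hcount, hdisj, ?_⟩
  calc ν (⋃ b ∈ T, ball b.1 b.2) ≤ ν (⋃ b ∈ u, ball b.1 (4 * b.2)) := by
        refine measure_mono (iUnion₂_subset fun b hb => ?_)
        obtain ⟨c, hc, hbc⟩ := hcov b hb
        exact hbc.trans (subset_biUnion_of_mem (u := fun b : M × ℝ => ball b.1 (4 * b.2)) hc)
    _ ≤ ∑' b : u, ν (ball b.1.1 (4 * b.1.2)) := measure_biUnion_le ν hcount _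
    _ ≤ K ^ 2 * ∑' b : u, ν (ball b.1.1 b.1.2) := by
        rw [← ENNReal.tsum_mul_left]
        exact ENNReal.tsum_le_tsum fun b =>
          hν.measure_ball_four_mul_le _ (hpos b (huT b.2))

theorem IsDoubling.mul_measure_biUnion_ball_le (hν : IsDoubling ν K) {T : Set (M × ℝ)} {R : ℝ}
    (hpos : ∀ b ∈ T, 0 < b.2) (hR : ∀ b ∈ T, b.2 ≤ R) {f : M → ℝ≥0∞} {a : ℝ≥0∞}
    (ha : ∀ b ∈ T, a * ν (ball b.1 b.2) ≤ ∫⁻ y in ball b.1 b.2, f y ∂ν) :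
    a * ν (⋃ b ∈ T, ball b.1 b.2) ≤ K ^ 2 * ∫⁻ x, f x ∂ν := by
  obtain ⟨u, huT, hcount, hdisj, hu⟩ := hν.exists_disjoint_subfamily_measure_le hpos hR
  calc a * ν (⋃ b ∈ T, ball b.1 b.2)
      ≤ a * (K ^ 2 * ∑' b : u, ν (ball b.1.1 b.1.2)) := by gcongr
    _ = K ^ 2 * ∑' b : u, a * ν (ball b.1.1 b.1.2) := by
        rw [mul_left_comm, ENNReal.tsum_mul_left]
    _ ≤ K ^ 2 * ∑' b : u, ∫⁻ y in ball b.1.1 b.1.2, f y ∂ν := by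
        gcongr with b
        exact ha b (huT b.2)
    _ = K ^ 2 * ∫⁻ y in ⋃ b ∈ u, ball b.1 b.2, f y ∂ν := by
        rw [lintegral_biUnion hcount (fun _ _ => measurableSet_ball) hdisj]
    _ ≤ K ^ 2 * ∫⁻ x, f x ∂ν := by
        gcongr
        exact Measure.restrict_le_self

theorem IsDoubling.mul_meas_lt_maximalFn_le (hν : IsDoubling ν K) (f : M → ℝ≥0∞) (a : ℝ≥0∞) :
    a * ν {x | a < maximalFn ν f x} ≤ K ^ 2 * ∫⁻ x, f x ∂ν := by
  let T (n : ℕ) : Set (M × ℝ) :=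
    {b | 0 < b.2 ∧ b.2 ≤ n ∧ a < (ν (ball b.1 b.2))⁻¹ * ∫⁻ y in ball b.1 b.2, f y ∂ν}
  have hexhaust : {x | a < maximalFn ν f x} = ⋃ n, ⋃ b ∈ T n, ball b.1 b.2 := by
    ext x
    simp only [setOf_lt_maximalFn, mem_iUnion, exists_prop]
    constructor
    · rintro ⟨z, r, ha, hx⟩
      obtain ⟨n, hn⟩ := exists_nat_ge r
      exact ⟨n, (z, r), ⟨pos_of_mem_ball hx, hn, ha⟩, hx⟩
    · rintro ⟨-, b, ⟨-, -, ha⟩, hx⟩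
      exact ⟨b.1, b.2, ha, hx⟩
  have hmono : Monotone fun n => ⋃ b ∈ T n, ball b.1 b.2 := fun m n hmn =>
    biUnion_subset_biUnion_left fun b hb => ⟨hb.1, hb.2.1.trans (by exact_mod_cast hmn), hb.2.2⟩
  rw [hexhaust, hmono.measure_iUnion, ENNReal.mul_iSup]
  exact iSup_le fun n => hν.mul_measure_biUnion_ball_le (fun _ hb => hb.1) (fun _ hb => hb.2.1)
    fun _ hb => hν.mul_measure_ball_le hb.2.2.le hb.1

-- Only the values of `f` above `a / 2` matter, since the others contribute at most `a / 2` to the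
-- maximal function.
theorem IsDoubling.mul_meas_lt_maximalFn_le_setLIntegral (hν : IsDoubling ν K) (f : M → ℝ≥0∞)
    (a : ℝ≥0∞) :
    a * ν {x | a < maximalFn ν f x} ≤ (2 * K ^ 2 : ℝ≥0) * ∫⁻ x in {x | a < 2 * f x}, f x ∂ν := by
  set g := {x | a < 2 * f x}.indicator f
  have hfg : f ≤ fun x => g x + a / 2 := fun x => by
    change f x ≤ g x + a / 2
    by_cases hx : x ∈ {x | a < 2 * f x}
    · simp only [g, indicator_of_mem hx, le_self_add]
    · have hgx : g x = 0 := indicator_of_notMem hx _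
      rw [hgx, zero_add, ENNReal.le_div_iff_mul_le (.inl two_ne_zero) (.inl ofNat_ne_top), mul_comm]
      exact not_lt.1 hx
  have hsub : {x | a < maximalFn ν f x} ⊆ {x | a / 2 < maximalFn ν g x} := by
    intro x hx
    contrapose! hx
    simp only [mem_ofPred_eq, not_lt] at hx ⊢
    calc maximalFn ν f x ≤ maximalFn ν g x + a / 2 :=
          (maximalFn_mono hfg x).trans (maximalFn_add_const_le g _ x)
      _ ≤ a / 2 + a / 2 := by gcongr
      _ = a := ENNReal.add_halves a
  calc a * ν {x | a < maximalFn ν f x}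
      ≤ 2 * (a / 2) * ν {x | a / 2 < maximalFn ν g x} := by
        rw [ENNReal.mul_div_cancel two_ne_zero ofNat_ne_top]
        gcongr
    _ ≤ 2 * (K ^ 2 * ∫⁻ x, g x ∂ν) := by
        rw [mul_assoc]
        gcongr 2 * ?_
        exact hν.mul_meas_lt_maximalFn_le g _
    _ ≤ (2 * K ^ 2 : ℝ≥0) * ∫⁻ x in {x | a < 2 * f x}, f x ∂ν := by
        rw [← mul_assoc]
        push_cast
        exact mul_le_mul_right (lintegral_indicator_le _ _) _

/-- The constant of the `L^q` maximal theorem for a measure with doubling constant `K`. -/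
noncomputable def maximalConst (q : ℝ) (K : ℝ≥0) : ℝ≥0 :=
  2 * K ^ 2 * (q / (q - 1)).toNNReal * 2 ^ (q - 1)

theorem IsDoubling.lintegral_maximalFn_rpow_le (hν : IsDoubling ν K) {q : ℝ} (hq : 1 < q)
    {f : M → ℝ≥0∞} (hf : AEMeasurable f ν) :
    ∫⁻ x, maximalFn ν f x ^ q ∂ν ≤ maximalConst q K * ∫⁻ x, f x ^ q ∂ν := by
  have hpow (a : ℝ≥0∞) : (2 * a) ^ (q - 1) * a = 2 ^ (q - 1) * a ^ q := by
    rw [mul_rpow_of_nonneg _ _ (sub_nonneg.2 hq.le), mul_assoc, rpow_sub_one_mul_self a hq.le]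
  calc ∫⁻ x, maximalFn ν f x ^ q ∂ν
      ≤ (2 * K ^ 2 : ℝ≥0) * ENNReal.ofReal (q / (q - 1)) * ∫⁻ x, (2 * f x) ^ (q - 1) * f x ∂ν :=
        lintegral_rpow_le_of_mul_meas_lt_le hf (measurable_maximalFn ν f).aemeasurable
          (hf.const_mul 2) hq (hν.mul_meas_lt_maximalFn_le_setLIntegral f)
    _ = maximalConst q K * ∫⁻ x, f x ^ q ∂ν := by
        simp_rw [hpow]
        rw [lintegral_const_mul'' _ (hf.pow_const q), ← mul_assoc, maximalConst, ENNReal.ofReal]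
        push_cast [coe_rpow_of_ne_zero (two_ne_zero (α := ℝ≥0))]
        rfl

end Doubling

/-! ### `A₁` weights -/

section A1Weights

theorem lintegral_rpow_mul_rpow_eq_withDensity {α : Type*} [MeasurableSpace α] {μ : Measure α}
    {f w : α → ℝ≥0∞} (hf : AEMeasurable f μ) (hw : AEMeasurable w μ) (hw0 : ∀ᵐ x ∂μ, w x ≠ 0)
    (hw_top : ∀ᵐ x ∂μ, w x ≠ ∞) {b q σ : ℝ} (hq : 0 ≤ q) (hbσ : b * q + σ = 1) :
    ∫⁻ x, f x ^ q * w x ^ σ ∂μ = ∫⁻ x, (f x * w x ^ (-b)) ^ q ∂μ.withDensity w := by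
  rw [lintegral_withDensity_eq_lintegral_mul₀ hw ((hf.fun_mul (hw.pow_const _)).pow_const q)]
  refine lintegral_congr_ae ?_
  filter_upwards [hw0, hw_top] with x hx0 hx_top
  have hσ : σ = 1 + -b * q := by linarith
  simp only [Pi.mul_apply]
  rw [hσ, rpow_add _ _ hx0 hx_top, rpow_one, mul_rpow_of_nonneg _ _ hq, rpow_mul]
  ring

variable {M : Type*} [PseudoMetricSpace M] [MeasurableSpace M] {μ : Measure M} {K A : ℝ≥0}
  {w : M → ℝ≥0∞}

/-- The weight `w` belongs to the Muckenhoupt class `A₁` of `μ` with constant `A`. The bound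
`𝓜w ≤ A w` is required at every point rather than almost everywhere. -/
structure IsA1 (μ : Measure M) (w : M → ℝ≥0∞) (A : ℝ≥0) : Prop where
  aemeasurable : AEMeasurable w μ
  ne_zero (x : M) : w x ≠ 0
  ae_ne_top : ∀ᵐ x ∂μ, w x ≠ ∞
  maximalFn_le (x : M) : maximalFn μ w x ≤ A * w x

theorem isA1_one (μ : Measure M) : IsA1 μ 1 1 where
  aemeasurable := aemeasurable_one
  ne_zero _ := one_ne_zero
  ae_ne_top := .of_forall fun _ => one_ne_top
  maximalFn_le x := (maximalFn_const_le 1 x).trans_eq (by simp)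

variable [OpensMeasurableSpace M]

theorem IsA1.withDensity_ball_le (hw : IsA1 μ w A) (hμ : IsDoubling μ K) {x z : M} {r : ℝ}
    (hx : x ∈ ball z r) : μ.withDensity w (ball z r) ≤ A * w x * μ (ball z r) := by
  rw [withDensity_apply _ measurableSet_ball, mul_comm, ← ENNReal.inv_mul_le_iff
    (hμ.measure_ball_ne_zero z (pos_of_mem_ball hx)) (hμ.measure_ball_ne_top z r)]
  exact (average_le_maximalFn hx).trans (hw.maximalFn_le x)

theorem IsA1.isDoubling_withDensity (hw : IsA1 μ w A) (hμ : IsDoubling μ K) :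
    IsDoubling (μ.withDensity w) (A * K) where
  measure_ball_ne_zero x r hr := by
    rw [Ne, withDensity_apply_eq_zero' hw.aemeasurable]
    simpa [hw.ne_zero] using hμ.measure_ball_ne_zero x hr
  measure_ball_ne_top x r := by
    obtain hr | hr := le_or_gt r 0
    · simp [ball_eq_empty.2 hr]
    obtain ⟨y, hy, hwy⟩ := (frequently_ae_mem_iff.2 (hμ.measure_ball_ne_zero x hr)).and_eventually
      hw.ae_ne_top |>.exists
    exact ne_top_of_le_ne_top
      (mul_ne_top (mul_ne_top coe_ne_top hwy) (hμ.measure_ball_ne_top x r))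
      (hw.withDensity_ball_le hμ hy)
  measure_ball_two_mul_le x r hr := by
    set ν := μ.withDensity w
    refine (ENNReal.mul_le_mul_iff_left (hμ.measure_ball_ne_zero x hr)
      (hμ.measure_ball_ne_top x r)).1 ?_
    calc ν (ball x (2 * r)) * μ (ball x r)
        = ∫⁻ _ in ball x r, ν (ball x (2 * r)) ∂μ := (setLIntegral_const _ _).symm
      _ ≤ ∫⁻ y in ball x r, A * K * μ (ball x r) * w y ∂μ := by
          refine setLIntegral_mono' measurableSet_ball fun y hy => ?_
          calc ν (ball x (2 * r)) ≤ A * w y * μ (ball x (2 * r)) :=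
                hw.withDensity_ball_le hμ (ball_subset_ball (by linarith) hy)
            _ ≤ A * w y * (K * μ (ball x r)) := by
                gcongr
                exact hμ.measure_ball_two_mul_le x hr
            _ = A * K * μ (ball x r) * w y := by ring
      _ = ↑(A * K) * ν (ball x r) * μ (ball x r) := by
          rw [lintegral_const_mul'' _ hw.aemeasurable.restrict,
            ← withDensity_apply _ measurableSet_ball, coe_mul, mul_right_comm]

theorem IsA1.withDensity_ball_div_le (hw : IsA1 μ w A) (hμ : IsDoubling μ K) {b : ℝ} (hb0 : 0 ≤ b)
    (hb1 : b ≤ 1) {x y z : M} {r : ℝ} (hx : x ∈ ball z r) (hy : y ∈ ball z r) :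
    μ.withDensity w (ball z r) / μ (ball z r) ≤ A * w x ^ b * w y ^ (1 - b) := by
  have hb : 0 ≤ 1 - b := sub_nonneg.2 hb1
  calc μ.withDensity w (ball z r) / μ (ball z r)
      ≤ (A * w y) ^ (1 - b) * (A * w x) ^ b :=
        le_rpow_mul_rpow hb0 hb1 (ENNReal.div_le_of_le_mul (hw.withDensity_ball_le hμ hy))
          (ENNReal.div_le_of_le_mul (hw.withDensity_ball_le hμ hx))
    _ = A ^ (1 - b) * A ^ b * w x ^ b * w y ^ (1 - b) := by
        rw [mul_rpow_of_nonneg _ _ hb, mul_rpow_of_nonneg _ _ hb0]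
        ring
    _ = A * w x ^ b * w y ^ (1 - b) := by
        rw [← rpow_add_of_nonneg _ _ hb hb0, sub_add_cancel, rpow_one]

theorem IsA1.maximalFn_le_mul_maximalFn_withDensity (hw : IsA1 μ w A) (hμ : IsDoubling μ K) {b : ℝ}
    (hb0 : 0 ≤ b) (hb1 : b ≤ 1) {f : M → ℝ≥0∞} (hf : AEMeasurable f μ) (x : M) :
    maximalFn μ f x ≤
      A * w x ^ b * maximalFn (μ.withDensity w) (fun y => f y * w y ^ (-b)) x := by
  refine FeffermanStein.maximalFn_le fun z r hx => ?_
  set B := ball z r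
  set ν := μ.withDensity w
  have hν := hw.isDoubling_withDensity hμ
  have hg : AEMeasurable (fun y => f y * w y ^ (-b)) μ := hf.mul (hw.aemeasurable.pow_const _)
  have hpoint : ∀ᵐ y ∂μ.restrict B,
      ν B / μ B * f y ≤ A * w x ^ b * (w y * (f y * w y ^ (-b))) := by
    filter_upwards [ae_restrict_mem measurableSet_ball, ae_restrict_of_ae hw.ae_ne_top]
      with y hy hwy
    calc ν B / μ B * f y ≤ A * w x ^ b * w y ^ (1 - b) * f y := by
          gcongr
          exact hw.withDensity_ball_div_le hμ hb0 hb1 hx hy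
      _ = A * w x ^ b * (w y * (f y * w y ^ (-b))) := by
          rw [sub_eq_add_neg, rpow_add _ _ (hw.ne_zero y) hwy, rpow_one]
          ring
  calc (μ B)⁻¹ * ∫⁻ y in B, f y ∂μ
      = (ν B)⁻¹ * (ν B / μ B * ∫⁻ y in B, f y ∂μ) := by
        rw [← mul_assoc, ← mul_div_assoc, ENNReal.inv_mul_cancel
          (hν.measure_ball_ne_zero z (pos_of_mem_ball hx)) (hν.measure_ball_ne_top z r), one_div]
    _ = (ν B)⁻¹ * ∫⁻ y in B, ν B / μ B * f y ∂μ := by rw [lintegral_const_mul'' _ hf.restrict]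
    _ ≤ (ν B)⁻¹ * ∫⁻ y in B, A * w x ^ b * (w y * (f y * w y ^ (-b))) ∂μ := by
        gcongr 1
        exact lintegral_mono_ae hpoint
    _ = A * w x ^ b * ((ν B)⁻¹ * ∫⁻ y in B, f y * w y ^ (-b) ∂ν) := by
        rw [lintegral_const_mul'' _ (hw.aemeasurable.fun_mul hg).restrict, mul_left_comm,
          setLIntegral_withDensity_eq_lintegral_mul₀ hw.aemeasurable hg measurableSet_ball]
        rfl
    _ ≤ _ := by
        gcongr
        exact average_le_maximalFn hx

theorem IsA1.lintegral_maximalFn_rpow_mul_le (hw : IsA1 μ w A) (hμ : IsDoubling μ K) {q σ : ℝ}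
    (hq : 1 < q) (hσ : σ ∈ Icc (1 - q) 1) {f : M → ℝ≥0∞} (hf : AEMeasurable f μ) :
    ∫⁻ x, maximalFn μ f x ^ q * w x ^ σ ∂μ ≤
      (A ^ q * maximalConst q (A * K) : ℝ≥0) * ∫⁻ x, f x ^ q * w x ^ σ ∂μ := by
  have hq0 : 0 < q := by linarith
  set b : ℝ := (1 - σ) / q
  have hb0 : 0 ≤ b := div_nonneg (by linarith [hσ.2]) hq0.le
  have hb1 : b ≤ 1 := (div_le_one hq0).2 (by linarith [hσ.1])
  have hbσ : b * q + σ = 1 := by rw [div_mul_cancel₀ _ hq0.ne']; ring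
  set ν := μ.withDensity w
  have hνμ : ν ≪ μ := withDensity_absolutelyContinuous μ w
  set g : M → ℝ≥0∞ := fun y => f y * w y ^ (-b)
  have hg : AEMeasurable g ν := (hf.mul (hw.aemeasurable.pow_const _)).mono_ac hνμ
  have hpoint : ∀ᵐ x ∂ν, maximalFn μ f x * w x ^ (-b) ≤ A * maximalFn ν g x := by
    filter_upwards [hνμ hw.ae_ne_top] with x hwx
    calc maximalFn μ f x * w x ^ (-b) ≤ A * w x ^ b * maximalFn ν g x * w x ^ (-b) := by
          gcongr
          exact hw.maximalFn_le_mul_maximalFn_withDensity hμ hb0 hb1 hf x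
      _ = A * maximalFn ν g x * (w x ^ b * w x ^ (-b)) := by ring
      _ = A * maximalFn ν g x := by
          rw [← rpow_add _ _ (hw.ne_zero x) hwx, add_neg_cancel, rpow_zero, mul_one]
  calc ∫⁻ x, maximalFn μ f x ^ q * w x ^ σ ∂μ
      = ∫⁻ x, (maximalFn μ f x * w x ^ (-b)) ^ q ∂ν :=
        lintegral_rpow_mul_rpow_eq_withDensity (measurable_maximalFn μ f).aemeasurable
          hw.aemeasurable (.of_forall hw.ne_zero) hw.ae_ne_top hq0.le hbσ
    _ ≤ ∫⁻ x, (A * maximalFn ν g x) ^ q ∂ν :=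
        lintegral_mono_ae (hpoint.mono fun x hx => rpow_le_rpow hx hq0.le)
    _ = A ^ q * ∫⁻ x, maximalFn ν g x ^ q ∂ν := by
        simp_rw [mul_rpow_of_nonneg _ _ hq0.le]
        rw [lintegral_const_mul _ ((measurable_maximalFn ν g).pow_const q)]
    _ ≤ A ^ q * (maximalConst q (A * K) * ∫⁻ x, g x ^ q ∂ν) := by
        gcongr
        exact (hw.isDoubling_withDensity hμ).lintegral_maximalFn_rpow_le hq hg
    _ = (A ^ q * maximalConst q (A * K) : ℝ≥0) * ∫⁻ x, f x ^ q * w x ^ σ ∂μ := by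
        rw [lintegral_rpow_mul_rpow_eq_withDensity hf hw.aemeasurable (.of_forall hw.ne_zero)
          hw.ae_ne_top hq0.le hbσ, ← mul_assoc, coe_mul, coe_rpow_of_nonneg _ hq0.le]

theorem IsA1.lintegral_tsum_maximalFn_rpow_mul_le {ι : Type*} [Countable ι] (hw : IsA1 μ w A)
    (hμ : IsDoubling μ K) {q σ : ℝ} (hq : 1 < q) (hσ : σ ∈ Icc (1 - q) 1) {f : ι → M → ℝ≥0∞}
    (hf : ∀ j, AEMeasurable (f j) μ) :
    ∫⁻ x, (∑' j, maximalFn μ (f j) x ^ q) * w x ^ σ ∂μ ≤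
      (A ^ q * maximalConst q (A * K) : ℝ≥0) * ∫⁻ x, (∑' j, f j x ^ q) * w x ^ σ ∂μ := by
  have hwσ := hw.aemeasurable.pow_const σ
  have hMf (j : ι) := (measurable_maximalFn μ (f j)).aemeasurable (μ := μ)
  simp_rw [← ENNReal.tsum_mul_right]
  rw [lintegral_tsum fun j => ((hMf j).pow_const q).fun_mul hwσ,
    lintegral_tsum fun j => ((hf j).pow_const q).fun_mul hwσ, ← ENNReal.tsum_mul_left]
  exact ENNReal.tsum_le_tsum fun j => hw.lintegral_maximalFn_rpow_mul_le hμ hq hσ (hf j)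

end A1Weights

/-! ### The Rubio de Francia algorithm -/

section RubioDeFrancia

variable {M : Type*} [PseudoMetricSpace M] [MeasurableSpace M] {μ : Measure M} {K c : ℝ≥0}
  {F : M → ℝ≥0∞}

/-- The Rubio de Francia majorant `∑ cᵏ 𝓜ᵏF` of `F`, an `A₁` weight for `c ≠ 0` because `𝓜` only
shifts the series. -/
noncomputable def rubioDeFrancia (μ : Measure M) (c : ℝ≥0) (F : M → ℝ≥0∞) (x : M) : ℝ≥0∞ :=
  ∑' k : ℕ, c ^ k * (maximalFn μ)^[k] F x

theorem le_rubioDeFrancia (c : ℝ≥0) (F : M → ℝ≥0∞) (x : M) : F x ≤ rubioDeFrancia μ c F x :=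
  (by simp : F x = c ^ 0 * (maximalFn μ)^[0] F x).trans_le (ENNReal.le_tsum 0)

theorem rubioDeFrancia_ne_zero (hμ : ∀ (z : M) (r : ℝ), μ (ball z r) ≠ ∞) (hc : c ≠ 0)
    (hF : AEMeasurable F μ) (hF0 : ¬ F =ᵐ[μ] 0) (x : M) : rubioDeFrancia μ c F x ≠ 0 := by
  have hM := maximalFn_ne_zero hμ hF hF0 x
  refine ne_bot_of_le_ne_bot ?_ (ENNReal.le_tsum 1)
  simp [hc, hM]

variable [OpensMeasurableSpace M]

theorem aemeasurable_iterate_maximalFn (hF : AEMeasurable F μ) :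
    ∀ k : ℕ, AEMeasurable ((maximalFn μ)^[k] F) μ
  | 0 => hF
  | k + 1 => by
    rw [Function.iterate_succ_apply']
    exact (measurable_maximalFn μ _).aemeasurable

theorem aemeasurable_rubioDeFrancia (c : ℝ≥0) (hF : AEMeasurable F μ) :
    AEMeasurable (rubioDeFrancia μ c F) μ :=
  .tsum fun k => (aemeasurable_iterate_maximalFn hF k).const_mul _

theorem maximalFn_rubioDeFrancia_le (hc : c ≠ 0) (hF : AEMeasurable F μ) (x : M) :
    maximalFn μ (rubioDeFrancia μ c F) x ≤ (c⁻¹ : ℝ≥0) * rubioDeFrancia μ c F x := by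
  calc maximalFn μ (rubioDeFrancia μ c F) x
      ≤ ∑' k : ℕ, c ^ k * maximalFn μ ((maximalFn μ)^[k] F) x :=
        maximalFn_tsum_le _ (aemeasurable_iterate_maximalFn hF) x
    _ = (c⁻¹ : ℝ≥0) * ∑' k : ℕ, c ^ (k + 1) * (maximalFn μ)^[k + 1] F x := by
        rw [← ENNReal.tsum_mul_left]
        refine tsum_congr fun k => ?_
        rw [Function.iterate_succ_apply', pow_succ', ← mul_assoc, ← mul_assoc, ← coe_mul,
          inv_mul_cancel₀ hc, coe_one, one_mul]
    _ ≤ (c⁻¹ : ℝ≥0) * rubioDeFrancia μ c F x := by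
        gcongr
        exact ENNReal.tsum_comp_le_tsum_of_injective Nat.succ_injective _

theorem lintegral_iterate_maximalFn_rpow_le (hμ : IsDoubling μ K) {s : ℝ} (hs : 1 < s)
    (hF : AEMeasurable F μ) (k : ℕ) :
    ∫⁻ x, (maximalFn μ)^[k] F x ^ s ∂μ ≤ maximalConst s K ^ k * ∫⁻ x, F x ^ s ∂μ := by
  induction k with
  | zero => simp
  | succ k ih =>
    rw [Function.iterate_succ_apply', pow_succ', mul_assoc]
    exact (hμ.lintegral_maximalFn_rpow_le hs (aemeasurable_iterate_maximalFn hF k)).trans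
      (mul_le_mul_right ih _)

theorem lintegral_rubioDeFrancia_rpow_le (hμ : IsDoubling μ K) {s : ℝ} (hs : 1 < s)
    (hc : c ≤ 2⁻¹) (hcC : c * maximalConst s K ≤ 2⁻¹) (hF : AEMeasurable F μ) :
    ∫⁻ x, rubioDeFrancia μ c F x ^ s ∂μ ≤ 2 ^ s * ∫⁻ x, F x ^ s ∂μ := by
  have hmeas (k : ℕ) := (aemeasurable_iterate_maximalFn hF k).pow_const s
  calc ∫⁻ x, rubioDeFrancia μ c F x ^ s ∂μ
      ≤ ∫⁻ x, 2 ^ (s - 1) * ∑' k : ℕ, c ^ k * (maximalFn μ)^[k] F x ^ s ∂μ := by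
        refine lintegral_mono fun x => (tsum_mul_rpow_le _ _ hs.le).trans ?_
        gcongr ?_ ^ _ * _
        exact tsum_pow_le_two hc
    _ = 2 ^ (s - 1) * ∑' k : ℕ, c ^ k * ∫⁻ x, (maximalFn μ)^[k] F x ^ s ∂μ := by
        rw [lintegral_const_mul'' _ (.tsum fun k => (hmeas k).const_mul _),
          lintegral_tsum fun k => (hmeas k).const_mul _]
        simp_rw [lintegral_const_mul'' _ (hmeas _)]
    _ ≤ 2 ^ (s - 1) * ∑' k : ℕ, (c * maximalConst s K : ℝ≥0) ^ k * ∫⁻ x, F x ^ s ∂μ := by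
        simp_rw [coe_mul, mul_pow, mul_assoc]
        gcongr with k
        exact lintegral_iterate_maximalFn_rpow_le hμ hs hF k
    _ ≤ 2 ^ s * ∫⁻ x, F x ^ s ∂μ := by
        rw [ENNReal.tsum_mul_right, ← mul_assoc, ← rpow_sub_one_mul_self 2 hs.le]
        gcongr
        exact tsum_pow_le_two hcC

theorem IsDoubling.exists_isA1_majorant (hμ : IsDoubling μ K) {s : ℝ} (hs : 1 < s) :
    ∃ A : ℝ≥0, ∀ F : M → ℝ≥0∞, AEMeasurable F μ → ∫⁻ x, F x ^ s ∂μ ≠ 0 → ∫⁻ x, F x ^ s ∂μ ≠ ∞ →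
      ∃ w, IsA1 μ w A ∧ F ≤ w ∧ ∫⁻ x, w x ^ s ∂μ ≤ 2 ^ s * ∫⁻ x, F x ^ s ∂μ := by
  set C := maximalConst s K
  set c : ℝ≥0 := 2⁻¹ * (C + 1)⁻¹
  have hs0 : 0 < s := by linarith
  have hc0 : c ≠ 0 := by positivity
  have hc : c ≤ 2⁻¹ := mul_le_of_le_one_right' (inv_le_one_of_one_le₀ le_add_self)
  have hcC : c * C ≤ 2⁻¹ := by
    rw [mul_assoc]
    exact mul_le_of_le_one_right' (inv_mul_le_one_of_le₀ le_self_add (by positivity))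
  refine ⟨c⁻¹, fun F hF hF0 hF_top => ?_⟩
  have hnorm := lintegral_rubioDeFrancia_rpow_le hμ hs hc hcC hF
  have hF_ne : ¬ F =ᵐ[μ] 0 := fun h => hF0 <| by
    rw [lintegral_congr_ae (h.mono fun x hx => by rw [hx])]
    simp [hs0]
  refine ⟨rubioDeFrancia μ c F, ⟨aemeasurable_rubioDeFrancia c hF,
    rubioDeFrancia_ne_zero hμ.measure_ball_ne_top hc0 hF hF_ne, ?_,
    maximalFn_rubioDeFrancia_le hc0 hF⟩, le_rubioDeFrancia c F, hnorm⟩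
  have hfin := ne_top_of_le_ne_top (mul_ne_top (by finiteness) hF_top) hnorm
  filter_upwards [ae_lt_top' ((aemeasurable_rubioDeFrancia c hF).pow_const s) hfin] with x hx h
  simp [h, hs0] at hx

end RubioDeFrancia

/-! ### Extrapolation -/

section Extrapolation

theorem lintegral_le_of_forall_le_of_lintegral_ne_top {α : Type*} [MeasurableSpace α]
    {μ : Measure α} [SigmaFinite μ] {f : α → ℝ≥0∞} {C : ℝ≥0∞}
    (H : ∀ v : α → ℝ≥0∞, Measurable v → v ≤ f → ∫⁻ x, v x ∂μ ≠ ∞ → ∫⁻ x, v x ∂μ ≤ C) :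
    ∫⁻ x, f x ∂μ ≤ C := by
  by_contra! hlt
  simp only [lintegral_eq_nnreal f μ, lt_iSup_iff] at hlt
  obtain ⟨φ, hφf, hφ⟩ := hlt
  rw [← SimpleFunc.lintegral_eq_lintegral] at hφ
  obtain ⟨ψ, hψφ, hψ_top, hψ⟩ := SimpleFunc.exists_lt_lintegral_simpleFunc_of_lt_lintegral hφ
  exact hψ.not_ge <| H (fun x => ψ x) (by fun_prop)
    (fun x => (coe_le_coe.2 (hψφ x)).trans (hφf x)) hψ_top.ne

theorem lintegral_le_of_dual_majorant {α : Type*} [MeasurableSpace α] {μ : Measure α} {r s : ℝ}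
    (hrs : r.HolderConjugate s) {v w F G : α → ℝ≥0∞} {B C : ℝ≥0∞} (hF : AEMeasurable F μ)
    (hw : AEMeasurable w μ) (hvG : ∀ x, v x ≤ G x ^ r) (hvw : ∀ x, v x ^ s⁻¹ ≤ w x)
    (hw_norm : ∫⁻ x, w x ^ s ∂μ ≤ B ^ s * ∫⁻ x, v x ∂μ) (hv_top : ∫⁻ x, v x ∂μ ≠ ∞)
    (hGF : ∫⁻ x, G x * w x ∂μ ≤ C * ∫⁻ x, F x * w x ∂μ) :
    ∫⁻ x, v x ∂μ ≤ (C * B) ^ r * ∫⁻ x, F x ^ r ∂μ := by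
  have habsorb : ∫⁻ x, v x ∂μ ≤
      C * B * (∫⁻ x, F x ^ r ∂μ) ^ r⁻¹ * (∫⁻ x, v x ∂μ) ^ s⁻¹ := by
    calc ∫⁻ x, v x ∂μ ≤ ∫⁻ x, G x * w x ∂μ := by
          refine lintegral_mono fun x => ?_
          calc v x = v x ^ r⁻¹ * v x ^ s⁻¹ := by
                rw [← rpow_add_of_nonneg _ _ hrs.inv_nonneg hrs.symm.inv_nonneg,
                  hrs.inv_add_inv_eq_one, rpow_one]
            _ ≤ G x * w x := mul_le_mul' ((rpow_inv_le_iff hrs.pos).2 (hvG x)) (hvw x)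
      _ ≤ C * ∫⁻ x, F x * w x ∂μ := hGF
      _ ≤ C * ((∫⁻ x, F x ^ r ∂μ) ^ r⁻¹ * (∫⁻ x, w x ^ s ∂μ) ^ s⁻¹) := by
          gcongr
          simpa only [Pi.mul_apply, one_div] using lintegral_mul_le_Lp_mul_Lq μ hrs hF hw
      _ ≤ C * ((∫⁻ x, F x ^ r ∂μ) ^ r⁻¹ * (B ^ s * ∫⁻ x, v x ∂μ) ^ s⁻¹) := by
          gcongr
          exact hrs.symm.inv_nonneg
      _ = _ := by
          rw [mul_rpow_of_nonneg _ _ hrs.symm.inv_nonneg, rpow_rpow_inv hrs.symm.ne_zero]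
          ring
  refine (le_rpow_of_le_mul_rpow hrs hv_top habsorb).trans_eq ?_
  rw [mul_rpow_of_nonneg _ _ hrs.nonneg, rpow_inv_rpow hrs.ne_zero]

theorem lintegral_rpow_le_mul_of_weight {α : Type*} [MeasurableSpace α] {μ : Measure α} {r s t : ℝ}
    (hr0 : 0 ≤ r) (hr1 : r ≤ 1) (hst : s * (1 - r) = t * r) {G w : α → ℝ≥0∞}
    (hG : AEMeasurable G μ) (hw : AEMeasurable w μ) (hw0 : ∀ᵐ x ∂μ, w x ≠ 0)
    (hw_top : ∀ᵐ x ∂μ, w x ≠ ∞) :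
    ∫⁻ x, G x ^ r ∂μ ≤
      (∫⁻ x, G x * w x ^ (-t) ∂μ) ^ r * (∫⁻ x, w x ^ s ∂μ) ^ (1 - r) := by
  have hsplit : ∀ᵐ x ∂μ, G x ^ r = (G x * w x ^ (-t)) ^ r * (w x ^ s) ^ (1 - r) := by
    filter_upwards [hw0, hw_top] with x hx0 hx_top
    rw [mul_rpow_of_nonneg _ _ hr0, ← rpow_mul, ← rpow_mul, mul_assoc, ← rpow_add _ _ hx0 hx_top,
      hst, neg_mul, neg_add_cancel, rpow_zero, mul_one]
  rw [lintegral_congr_ae hsplit]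
  exact lintegral_mul_norm_pow_le (hG.mul (hw.pow_const _)) (hw.pow_const _) hr0
    (sub_nonneg.2 hr1) (add_sub_cancel _ _)

theorem lintegral_rpow_le_of_weight_majorant {α : Type*} [MeasurableSpace α] {μ : Measure α}
    {r s t : ℝ} (ht : 0 < t) (hr0 : 0 ≤ r) (hr1 : r < 1) (hst : s * (1 - r) = t * r)
    {w F G : α → ℝ≥0∞} {B C : ℝ≥0∞} (hG : AEMeasurable G μ) (hw : AEMeasurable w μ)
    (hw0 : ∀ᵐ x ∂μ, w x ≠ 0) (hw_top : ∀ᵐ x ∂μ, w x ≠ ∞) (hFw : ∀ x, F x ^ ((1 - r) / t) ≤ w x)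
    (hw_norm : ∫⁻ x, w x ^ s ∂μ ≤ B * ∫⁻ x, F x ^ r ∂μ)
    (hGF : ∫⁻ x, G x * w x ^ (-t) ∂μ ≤ C * ∫⁻ x, F x * w x ^ (-t) ∂μ) :
    ∫⁻ x, G x ^ r ∂μ ≤ C ^ r * B ^ (1 - r) * ∫⁻ x, F x ^ r ∂μ := by
  have hr : 0 ≤ 1 - r := sub_nonneg.2 hr1.le
  have hF : ∫⁻ x, F x * w x ^ (-t) ∂μ ≤ ∫⁻ x, F x ^ r ∂μ :=
    lintegral_mono fun x => mul_rpow_neg_le_rpow ht hr1 (hFw x)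
  set I := ∫⁻ x, F x ^ r ∂μ
  calc ∫⁻ x, G x ^ r ∂μ
      ≤ (∫⁻ x, G x * w x ^ (-t) ∂μ) ^ r * (∫⁻ x, w x ^ s ∂μ) ^ (1 - r) :=
        lintegral_rpow_le_mul_of_weight hr0 hr1.le hst hG hw hw0 hw_top
    _ ≤ (C * I) ^ r * (B * I) ^ (1 - r) := by
        gcongr
        exact hGF.trans (mul_le_mul_right hF C)
    _ = C ^ r * B ^ (1 - r) * (I ^ r * I ^ (1 - r)) := by
        rw [mul_rpow_of_nonneg _ _ hr0, mul_rpow_of_nonneg _ _ hr]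
        ring
    _ = C ^ r * B ^ (1 - r) * I := by
        rw [← rpow_add_of_nonneg _ _ hr0 hr, add_sub_cancel, rpow_one]

theorem lintegral_rpow_eq_zero_of_lintegral_le {α : Type*} [MeasurableSpace α] {μ : Measure α}
    {r : ℝ} (hr : 0 < r) {F G : α → ℝ≥0∞} {C : ℝ≥0∞} (hF : AEMeasurable F μ)
    (hG : AEMeasurable G μ) (hGF : ∫⁻ x, G x ∂μ ≤ C * ∫⁻ x, F x ∂μ)
    (hF0 : ∫⁻ x, F x ^ r ∂μ = 0) : ∫⁻ x, G x ^ r ∂μ = 0 := by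
  have hF_ae : F =ᵐ[μ] 0 := ((lintegral_eq_zero_iff' (hF.pow_const r)).1 hF0).mono fun x hx =>
    (rpow_eq_zero_iff_of_pos hr).1 hx
  have hG0 : ∫⁻ x, G x ∂μ = 0 := by
    simpa [(lintegral_eq_zero_iff' hF).2 hF_ae] using hGF
  rw [lintegral_eq_zero_iff' (hG.pow_const r)]
  exact ((lintegral_eq_zero_iff' hG).1 hG0).mono fun x hx => (rpow_eq_zero_iff_of_pos hr).2 hx

variable {M : Type*} [PseudoMetricSpace M] [MeasurableSpace M] [OpensMeasurableSpace M]
  {μ : Measure M} {K : ℝ≥0} {ι : Type*} {F G : ι → M → ℝ≥0∞}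

-- A finite-integral `v ≤ G ^ r` is tested against an `A₁` majorant of its dual power `v ^ s⁻¹`,
-- and `∫ v` is then absorbed into the left-hand side.
theorem IsDoubling.exists_lintegral_rpow_le_of_one_lt (hμ : IsDoubling μ K)
    (hF : ∀ i, AEMeasurable (F i) μ) {r : ℝ} (hr : 1 < r)
    (H : ∀ A : ℝ≥0, ∃ C : ℝ≥0, ∀ w, IsA1 μ w A →
      ∀ i, ∫⁻ x, G i x * w x ∂μ ≤ C * ∫⁻ x, F i x * w x ∂μ) :
    ∃ C : ℝ≥0, ∀ i, ∫⁻ x, G i x ^ r ∂μ ≤ C * ∫⁻ x, F i x ^ r ∂μ := by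
  have hrs := Real.HolderConjugate.conjExponent hr
  set s := r.conjExponent
  have := hμ.sigmaFinite
  obtain ⟨A, hA⟩ := hμ.exists_isA1_majorant hrs.symm.lt
  obtain ⟨C, hC⟩ := H A
  refine ⟨(C * 2) ^ r, fun i => lintegral_le_of_forall_le_of_lintegral_ne_top
    fun v hv hvG hv_top => ?_⟩
  rcases eq_or_ne (∫⁻ x, v x ∂μ) 0 with hv0 | hv0
  · exact hv0.trans_le zero_le
  have hpow : ∫⁻ x, (v x ^ s⁻¹) ^ s ∂μ = ∫⁻ x, v x ∂μ := by
    simp_rw [rpow_inv_rpow hrs.symm.ne_zero]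
  obtain ⟨w, hw, hvw, hw_norm⟩ := hA (fun x => v x ^ s⁻¹) (hv.aemeasurable.pow_const _)
    (hpow ▸ hv0) (hpow ▸ hv_top)
  rw [hpow] at hw_norm
  rw [coe_rpow_of_nonneg _ hrs.nonneg, coe_mul, coe_ofNat]
  exact lintegral_le_of_dual_majorant hrs (hF i) hw.aemeasurable hvG hvw hw_norm hv_top (hC w hw i)

-- Hölder's inequality with an `A₁` majorant `w` of `F ^ ((1 - r) / t)`, for which
-- `F * w ^ (-t) ≤ F ^ r`; Rubio de Francia's algorithm needs `1 < r * (1 + t)` to produce it.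
theorem IsDoubling.exists_lintegral_rpow_le_of_lt_one (hμ : IsDoubling μ K)
    (hF : ∀ i, AEMeasurable (F i) μ) (hG : ∀ i, AEMeasurable (G i) μ) {r t : ℝ} (ht : 0 < t)
    (hr : r < 1) (hrt : 1 < r * (1 + t))
    (H : ∀ A : ℝ≥0, ∃ C : ℝ≥0, ∀ w, IsA1 μ w A →
      ∀ i, ∫⁻ x, G i x * w x ^ (-t) ∂μ ≤ C * ∫⁻ x, F i x * w x ^ (-t) ∂μ) :
    ∃ C : ℝ≥0, ∀ i, ∫⁻ x, G i x ^ r ∂μ ≤ C * ∫⁻ x, F i x ^ r ∂μ := by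
  have hr0 : 0 < r := pos_of_mul_pos_left (one_pos.trans hrt) (by positivity)
  have hr1 : 0 < 1 - r := sub_pos.2 hr
  set s := t * r / (1 - r)
  have hs : 1 < s := (one_lt_div hr1).2 (by linarith)
  have hst : s * (1 - r) = t * r := div_mul_cancel₀ _ hr1.ne'
  obtain ⟨A, hA⟩ := hμ.exists_isA1_majorant hs
  obtain ⟨C, hC⟩ := H A
  obtain ⟨C₁, hC₁⟩ := H 1
  refine ⟨(C + 1) ^ r * (2 ^ s) ^ (1 - r), fun i => ?_⟩
  rcases eq_or_ne (∫⁻ x, F i x ^ r ∂μ) 0 with hF0 | hF0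
  · have hGF := hC₁ 1 (isA1_one μ) i
    simp only [Pi.one_apply, one_rpow, mul_one] at hGF
    exact (lintegral_rpow_eq_zero_of_lintegral_le hr0 (hF i) (hG i) hGF hF0).trans_le zero_le
  rcases eq_or_ne (∫⁻ x, F i x ^ r ∂μ) ∞ with hF_top | hF_top
  · rw [hF_top, mul_top (coe_ne_zero.2 (by positivity))]
    exact le_top
  have hpow : ∫⁻ x, (F i x ^ ((1 - r) / t)) ^ s ∂μ = ∫⁻ x, F i x ^ r ∂μ := by
    have : (1 - r) / t * s = r := by
      rw [div_mul_eq_mul_div, mul_comm, hst, mul_div_cancel_left₀ _ ht.ne']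
    simp_rw [← rpow_mul, this]
  obtain ⟨w, hw, hFw, hw_norm⟩ := hA (fun x => F i x ^ ((1 - r) / t)) ((hF i).pow_const _)
    (hpow ▸ hF0) (hpow ▸ hF_top)
  rw [hpow] at hw_norm
  refine (lintegral_rpow_le_of_weight_majorant ht hr0.le hr hst (hG i) hw.aemeasurable
    (.of_forall hw.ne_zero) hw.ae_ne_top hFw hw_norm (hC w hw i)).trans ?_
  rw [coe_mul, coe_rpow_of_nonneg _ hr0.le, coe_rpow_of_nonneg _ hr1.le,
    coe_rpow_of_nonneg _ (by linarith : 0 ≤ s), coe_add, coe_one, coe_ofNat]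
  gcongr
  exact le_self_add

end Extrapolation

/-! ### The vector-valued inequality -/

section VectorValued

variable {M : Type*} [PseudoMetricSpace M] [MeasurableSpace M] [OpensMeasurableSpace M]
  {μ : Measure M} {K : ℝ≥0}

theorem IsDoubling.exists_lintegral_tsum_maximalFn_rpow_le {ι : Type*} [Countable ι]
    (hμ : IsDoubling μ K) {p q : ℝ} (hp : 1 < p) (hq : 1 < q) :
    ∃ C : ℝ≥0, ∀ f : ι → M → ℝ≥0∞, (∀ j, AEMeasurable (f j) μ) →
      ∫⁻ x, (∑' j, maximalFn μ (f j) x ^ q) ^ (p / q) ∂μ ≤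
        C * ∫⁻ x, (∑' j, f j x ^ q) ^ (p / q) ∂μ := by
  have hq0 : 0 < q := one_pos.trans hq
  let F (g : {f : ι → M → ℝ≥0∞ // ∀ j, AEMeasurable (f j) μ}) (x : M) := ∑' j, g.1 j x ^ q
  let G (g : {f : ι → M → ℝ≥0∞ // ∀ j, AEMeasurable (f j) μ}) (x : M) :=
    ∑' j, maximalFn μ (g.1 j) x ^ q
  have hF : ∀ g, AEMeasurable (F g) μ := fun g => .tsum fun j => (g.2 j).pow_const q
  have hG : ∀ g, AEMeasurable (G g) μ := fun g =>
    .tsum fun j => (measurable_maximalFn μ (g.1 j)).aemeasurable.pow_const q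
  have hweight {σ : ℝ} (hσ : σ ∈ Icc (1 - q) 1) (A : ℝ≥0) : ∃ C : ℝ≥0, ∀ w, IsA1 μ w A →
      ∀ g, ∫⁻ x, G g x * w x ^ σ ∂μ ≤ C * ∫⁻ x, F g x * w x ^ σ ∂μ :=
    ⟨_, fun w hw g => hw.lintegral_tsum_maximalFn_rpow_mul_le hμ hq hσ g.2⟩
  suffices h : ∃ C : ℝ≥0, ∀ g, ∫⁻ x, G g x ^ (p / q) ∂μ ≤ C * ∫⁻ x, F g x ^ (p / q) ∂μ from
    h.imp fun C hC f hf => hC ⟨f, hf⟩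
  rcases lt_trichotomy p q with hpq | rfl | hpq
  · refine hμ.exists_lintegral_rpow_le_of_lt_one hF hG (sub_pos.2 hq) ((div_lt_one hq0).2 hpq) ?_ ?_
    · rwa [add_sub_cancel, div_mul_cancel₀ _ hq0.ne']
    · rw [neg_sub]
      exact hweight ⟨le_rfl, by linarith⟩
  · obtain ⟨C, hC⟩ := hweight (σ := 0) ⟨by linarith, zero_le_one⟩ 1
    refine ⟨C, fun g => ?_⟩
    simpa [div_self hq0.ne'] using hC 1 (isA1_one μ) g
  · refine hμ.exists_lintegral_rpow_le_of_one_lt hF ((one_lt_div hq0).2 hpq) ?_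
    simpa only [rpow_one] using hweight (σ := 1) ⟨by linarith, le_rfl⟩

theorem pNorm_le_of_lintegral_rpow_le {α : Type*} [MeasurableSpace α] {μ : Measure α} {p : ℝ≥0∞}
    (hp : p ≠ ∞) {g h : α → ℝ≥0∞} {C : ℝ≥0∞}
    (H : ∫⁻ x, g x ^ p.toReal ∂μ ≤ C * ∫⁻ x, h x ^ p.toReal ∂μ) :
    pNorm μ p g ≤ C ^ (1 / p.toReal) * pNorm μ p h := by
  simp only [pNorm, if_neg hp]
  rw [← mul_rpow_of_nonneg _ _ (by positivity)]
  gcongr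

theorem qSum_top (g : ℕ → ℝ≥0∞) : qSum ∞ g = ⨆ j, g j := if_pos rfl

theorem qSum_rpow {q : ℝ≥0∞} (hq : q ≠ ∞) (g : ℕ → ℝ≥0∞) (p : ℝ) :
    qSum q g ^ p = (∑' j, g j ^ q.toReal) ^ (p / q.toReal) := by
  rw [qSum, if_neg hq, ← rpow_mul, one_div_mul_eq_div]

theorem IsDoubling.exists_lintegral_qSum_maximalFn_rpow_le (hμ : IsDoubling μ K) {p : ℝ}
    (hp : 1 < p) {q : ℝ≥0∞} (hq : 1 < q) :
    ∃ C : ℝ≥0, ∀ f : ℕ → M → ℝ≥0∞, (∀ j, AEMeasurable (f j) μ) →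
      ∫⁻ x, qSum q (fun j => maximalFn μ (f j) x) ^ p ∂μ ≤
        C * ∫⁻ x, qSum q (fun j => f j x) ^ p ∂μ := by
  rcases eq_or_ne q ∞ with rfl | hq_top
  · refine ⟨maximalConst p K, fun f hf => ?_⟩
    simp_rw [qSum_top]
    calc ∫⁻ x, (⨆ j, maximalFn μ (f j) x) ^ p ∂μ
        ≤ ∫⁻ x, maximalFn μ (fun y => ⨆ j, f j y) x ^ p ∂μ := by
          gcongr with x
          exact iSup_maximalFn_le f x
      _ ≤ maximalConst p K * ∫⁻ x, (⨆ j, f j x) ^ p ∂μ :=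
          hμ.lintegral_maximalFn_rpow_le hp (.iSup hf)
  · simp_rw [qSum_rpow hq_top]
    exact hμ.exists_lintegral_tsum_maximalFn_rpow_le hp
      ((toReal_lt_toReal one_ne_top hq_top).2 hq)

end VectorValued

end FeffermanStein

open FeffermanStein

theorem fefferman_stein_general {M : Type*} [PseudoMetricSpace M] [MeasurableSpace M]
    [OpensMeasurableSpace M] {μ : Measure M} {K : NNReal} (hμ : IsDoubling μ K) {p q : ℝ≥0∞}
    (hp1 : 1 < p) (hp2 : p ≠ ∞) (hq : 1 < q) :
    ∃ C : ℝ≥0∞, 0 < C ∧ C ≠ ∞ ∧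
      ∀ f : ℕ → M → ℝ≥0∞, (∀ j, AEMeasurable (f j) μ) →
        pNorm μ p (fun x => qSum q (fun j => maximalFn μ (f j) x)) ≤
          C * pNorm μ p (fun x => qSum q (fun j => f j x)) := by
  have hp : 1 < p.toReal := by simpa using (toReal_lt_toReal one_ne_top hp2).2 hp1
  obtain ⟨C, hC⟩ := hμ.exists_lintegral_qSum_maximalFn_rpow_le hp hq
  refine ⟨(C + 1) ^ (1 / p.toReal), by positivity, by finiteness, fun f hf => ?_⟩
  exact pNorm_le_of_lintegral_rpow_le hp2 ((hC f hf).trans (by gcongr; exact le_self_add))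

/-- Fefferman–Stein vector-valued maximal inequality on a doubling metric
measure space. For `1 < p < ∞` and `1 < q ≤ ∞` there is `C > 0` such that for every sequence
`{f_j}` of measurable functions, `‖(Σ_j (𝓜 f_j)^q)^{1/q}‖_{L^p} ≤ C ‖(Σ_j |f_j|^q)^{1/q}‖_{L^p}`. -/
theorem fefferman_stein
    {M : Type*} [MetricSpace M] [MeasurableSpace M] [BorelSpace M] (μ : Measure M)
    (c₀ : ℝ) (hc₀ : 1 < c₀)
    (hdoubling : ∀ (x : M) (r : ℝ), 0 < r →
      0 < μ (ball x (2 * r)) ∧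
      μ (ball x (2 * r)) ≤ ENNReal.ofReal c₀ * μ (ball x r) ∧
      μ (ball x (2 * r)) < ⊤)
    (p q : ℝ≥0∞) (hp1 : 1 < p) (hp2 : p ≠ ∞) (hq : 1 < q) :
    ∃ C : ℝ≥0∞, 0 < C ∧ C ≠ ∞ ∧
      ∀ f : ℕ → M → ℝ, (∀ j, Measurable (f j)) →
        pNorm μ p (fun x => qSum q (fun j => HLmaximal μ (f j) x)) ≤
          C * pNorm μ p (fun x => qSum q (fun j => ENNReal.ofReal |f j x|)) := by
  have hμ : IsDoubling μ c₀.toNNReal := .of_measure_ball_two_mul hdoubling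
  obtain ⟨C, hC0, hC_top, hC⟩ := fefferman_stein_general hμ hp1 hp2 hq
  exact ⟨C, hC0, hC_top, fun f hf => hC (fun j y => ENNReal.ofReal |f j y|) fun j => by fun_prop⟩
end

section
/- Let m be a positive integer and define ω₀(λ) := e^{−λ²} and ω(λ) := λ^{2m} e^{−λ²} for λ ∈ ℝ. Then there exist even Schwartz functions ψ₀, ψ on ℝ such that supp ψ₀ ⊂ {λ : |λ| ≤ 2}, supp ψ ⊂ {λ : 1/2 ≤ |λ| ≤ 2}, and ψ₀(λ) ω₀(λ) + Σ_{j=1}^∞ ψ(2^{−j}λ) ω(2^{−j}λ) = 1 for all λ ∈ ℝ. -/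
/-!
Let `χ` be a smooth even cutoff, equal to `1` on `‖x‖ ≤ 1` and to `0` on `‖x‖ ≥ 2`. Choose
`ψ₀ ω₀ = χ` and `ψ ω = χ - χ(2 ·)`. The sum over `j ≥ 1` telescopes to `1 - χ x`, because
`χ(2⁻ʲ x) = 1` for all large `j`. As `χ - χ(2 ·)` is supported in the annulus `1/2 ≤ ‖x‖ ≤ 2`, the
division by `ω` is smooth as soon as `ω` has no zero there, whatever its behaviour at the origin.
-/

open Filter Topology

/-- The Littlewood–Paley difference `χ - χ(2 ·)`, which isolates a single dyadic annulus when `χ` is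
a cutoff around the origin. -/
def dyadicDiff {E F : Type*} [SMul ℝ E] [Sub F] (χ : E → F) (x : E) : F :=
  χ x - χ ((2 : ℝ) • x)

theorem even_dyadicDiff {E F : Type*} [AddCommGroup E] [Module ℝ E] [Sub F] {χ : E → F}
    (hχ : χ.Even) : (dyadicDiff χ).Even := fun x ↦ by
  simp only [dyadicDiff, smul_neg, hχ _]

theorem contDiff_dyadicDiff {E F : Type*} [NormedAddCommGroup E] [NormedSpace ℝ E]
    [NormedAddCommGroup F] [NormedSpace ℝ F] {χ : E → F} {n : WithTop ℕ∞}
    (hχ : ContDiff ℝ n χ) : ContDiff ℝ n (dyadicDiff χ) :=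
  hχ.sub (hχ.comp (contDiff_const_smul 2))

theorem tsupport_dyadicDiff_subset {E F : Type*} [NormedAddCommGroup E] [NormedSpace ℝ E]
    [AddGroup F] {χ : E → F} {c : F} {r R : ℝ} (hχ_const : ∀ x, ‖x‖ ≤ r → χ x = c)
    (hχ_zero : ∀ x, R ≤ ‖x‖ → χ x = 0) :
    tsupport (dyadicDiff χ) ⊆ {x | r / 2 ≤ ‖x‖ ∧ ‖x‖ ≤ R} := by
  refine closure_minimal (fun x hx ↦ ?_) ((isClosed_le continuous_const continuous_norm).inter
    (isClosed_le continuous_norm continuous_const))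
  have norm_two_smul : ‖(2 : ℝ) • x‖ = 2 * ‖x‖ := by simp [norm_smul]
  have hx_nonneg : 0 ≤ ‖x‖ := norm_nonneg x
  constructor <;> by_contra! hlt <;> refine hx (sub_eq_zero.2 ?_)
  · rw [hχ_const x (by linarith), hχ_const _ (by linarith)]
  · rw [hχ_zero x (by linarith), hχ_zero _ (by linarith)]

theorem hasSum_sub_of_eventually_eq {F : Type*} [AddCommGroup F] [TopologicalSpace F]
    {f : ℕ → F} {c : F} (hf : ∀ᶠ n in atTop, f n = c) :
    HasSum (fun n ↦ f (n + 1) - f n) (c - f 0) := by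
  obtain ⟨N, hN⟩ := eventually_atTop.1 hf
  rw [← hN N le_rfl, ← Finset.sum_range_sub]
  refine hasSum_sum_of_ne_finset_zero fun n hn ↦ ?_
  have hNn : N ≤ n := by simpa using hn
  rw [hN n hNn, hN (n + 1) (hNn.trans n.le_succ), sub_self]

theorem hasSum_dyadicDiff {E F : Type*} [AddCommGroup E] [Module ℝ E] [TopologicalSpace E]
    [ContinuousSMul ℝ E] [AddCommGroup F] [TopologicalSpace F] {χ : E → F} {c : F}
    (hχ : ∀ᶠ y in 𝓝 0, χ y = c) (x : E) :
    HasSum (fun j : ℕ ↦ dyadicDiff χ ((2 : ℝ) ^ (-((j : ℝ) + 1)) • x)) (c - χ x) := by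
  have scale_tendsto : Tendsto (fun j : ℕ ↦ (2 : ℝ) ^ (-(j : ℝ)) • x) atTop (𝓝 0) := by
    have h : Tendsto (fun j : ℕ ↦ (2 : ℝ) ^ (-(j : ℝ))) atTop (𝓝 0) :=
      (tendsto_rpow_atBot_of_base_gt_one 2 one_lt_two).comp
        (tendsto_neg_atTop_atBot.comp tendsto_natCast_atTop_atTop)
    simpa only [zero_smul] using h.smul_const x
  have two_mul_scale (j : ℕ) : 2 * (2 : ℝ) ^ (-((j : ℝ) + 1)) = 2 ^ (-(j : ℝ)) := by
    rw [neg_add, Real.rpow_add two_pos, Real.rpow_neg_one]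
    ring
  simpa only [dyadicDiff, smul_smul, two_mul_scale, Nat.cast_succ, Nat.cast_zero, neg_zero,
    Real.rpow_zero, one_smul] using
    hasSum_sub_of_eventually_eq (scale_tendsto.eventually hχ)

theorem tsupport_div_subset_left {X G₀ : Type*} [TopologicalSpace X] [GroupWithZero G₀]
    (g ω : X → G₀) : tsupport (fun x ↦ g x / ω x) ⊆ tsupport g := by
  simpa only [div_eq_mul_inv] using tsupport_mul_subset_left

theorem contDiff_div_of_ne_zero_on_tsupport {𝕜 E : Type*} [NontriviallyNormedField 𝕜]
    [NormedAddCommGroup E] [NormedSpace 𝕜 E] {n : WithTop ℕ∞} {g ω : E → 𝕜}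
    (hg : ContDiff 𝕜 n g) (hω : ContDiff 𝕜 n ω) (hne : ∀ x ∈ tsupport g, ω x ≠ 0) :
    ContDiff 𝕜 n fun x ↦ g x / ω x := by
  refine (contMDiff_of_tsupport fun x hx ↦ ?_).contDiff
  have hωx : ω x ≠ 0 := hne x (tsupport_div_subset_left g ω hx)
  exact (hg.contDiffAt.fun_div hω.contDiffAt hωx).contMDiffAt

theorem exists_schwartz_even_mul_eq {E : Type*} [NormedAddCommGroup E] [NormedSpace ℝ E]
    {g ω : E → ℝ} (hg : ContDiff ℝ (⊤ : ℕ∞) g) (hg_compact : HasCompactSupport g)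
    (hg_even : g.Even) (hω : ContDiff ℝ (⊤ : ℕ∞) ω) (hω_even : ω.Even)
    (hne : ∀ x ∈ tsupport g, ω x ≠ 0) :
    ∃ ψ : SchwartzMap E ℝ, (⇑ψ).Even ∧ tsupport ψ ⊆ tsupport g ∧ ∀ x, ψ x * ω x = g x := by
  have hsupp := tsupport_div_subset_left g ω
  have hcompact : HasCompactSupport fun x ↦ g x / ω x :=
    hg_compact.of_isClosed_subset (isClosed_tsupport _) hsupp
  refine ⟨hcompact.toSchwartzMap (contDiff_div_of_ne_zero_on_tsupport hg hω hne),
    fun x ↦ congrArg₂ (· / ·) (hg_even x) (hω_even x), hsupp, fun x ↦ ?_⟩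
  refine div_mul_cancel_of_imp fun hωx ↦ ?_
  exact image_eq_zero_of_notMem_tsupport fun hx ↦ hne x hx hωx

theorem exists_schwartz_partition_general {E : Type*} [NormedAddCommGroup E] [NormedSpace ℝ E]
    [FiniteDimensional ℝ E] {ω₀ ω : E → ℝ}
    (hω₀ : ContDiff ℝ (⊤ : ℕ∞) ω₀) (hω : ContDiff ℝ (⊤ : ℕ∞) ω)
    (hω₀_even : ω₀.Even) (hω_even : ω.Even) (hω₀_ne : ∀ x, ‖x‖ ≤ 2 → ω₀ x ≠ 0)
    (hω_ne : ∀ x, 1 / 2 ≤ ‖x‖ → ‖x‖ ≤ 2 → ω x ≠ 0) :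
    ∃ ψ₀ ψ : SchwartzMap E ℝ,
      (⇑ψ₀).Even ∧ (⇑ψ).Even ∧
      tsupport ψ₀ ⊆ {x | ‖x‖ ≤ 2} ∧
      tsupport ψ ⊆ {x | 1 / 2 ≤ ‖x‖ ∧ ‖x‖ ≤ 2} ∧
      ∀ x, HasSum (fun j : ℕ ↦ ψ ((2 : ℝ) ^ (-((j : ℝ) + 1)) • x) *
        ω ((2 : ℝ) ^ (-((j : ℝ) + 1)) • x)) (1 - ψ₀ x * ω₀ x) := by
  let χ : ContDiffBump (0 : E) := ⟨1, 2, one_pos, one_lt_two⟩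
  have χ_supp : tsupport χ ⊆ {x | ‖x‖ ≤ 2} := fun x hx ↦ by
    simpa using χ.tsupport_eq.subset hx
  have diff_supp : tsupport (dyadicDiff χ) ⊆ {x | 1 / 2 ≤ ‖x‖ ∧ ‖x‖ ≤ 2} :=
    tsupport_dyadicDiff_subset
      (fun _ hx ↦ χ.one_of_mem_closedBall (mem_closedBall_zero_iff.2 hx))
      (fun x hx ↦ χ.zero_of_le_dist ((dist_zero_right x).symm ▸ hx))
  have diff_compact : HasCompactSupport (dyadicDiff χ) :=
    (isCompact_closedBall (0 : E) 2).of_isClosed_subset (isClosed_tsupport _) fun x hx ↦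
      mem_closedBall_zero_iff.2 (diff_supp hx).2
  obtain ⟨ψ₀, ψ₀_even, ψ₀_supp, ψ₀_mul⟩ := exists_schwartz_even_mul_eq χ.contDiff
    χ.hasCompactSupport χ.neg hω₀ hω₀_even fun x hx ↦ hω₀_ne x (χ_supp hx)
  obtain ⟨ψ, ψ_even, ψ_supp, ψ_mul⟩ := exists_schwartz_even_mul_eq (contDiff_dyadicDiff χ.contDiff)
    diff_compact (even_dyadicDiff χ.neg) hω hω_even
    fun x hx ↦ hω_ne x (diff_supp hx).1 (diff_supp hx).2
  refine ⟨ψ₀, ψ, ψ₀_even, ψ_even, ψ₀_supp.trans χ_supp, ψ_supp.trans diff_supp, fun x ↦ ?_⟩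
  simp only [ψ₀_mul, ψ_mul]
  exact hasSum_dyadicDiff χ.eventuallyEq_one x

/-- For a positive integer `m`, with `ω₀(λ) = e^{-λ²}` and
`ω(λ) = λ^{2m} e^{-λ²}`, there exist even Schwartz functions `ψ₀, ψ` on `ℝ` with
`supp ψ₀ ⊆ {|λ| ≤ 2}`, `supp ψ ⊆ {1/2 ≤ |λ| ≤ 2}`, and
`ψ₀(λ) ω₀(λ) + Σ_{j=1}^∞ ψ(2^{-j}λ) ω(2^{-j}λ) = 1` for all `λ ∈ ℝ`. -/
theorem exists_schwartz_partition (m : ℕ) (hm : 0 < m) :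
    ∃ ψ₀ ψ : SchwartzMap ℝ ℝ,
      (∀ x : ℝ, ψ₀ (-x) = ψ₀ x) ∧ (∀ x : ℝ, ψ (-x) = ψ x) ∧
      tsupport (⇑ψ₀) ⊆ {x : ℝ | |x| ≤ 2} ∧
      tsupport (⇑ψ) ⊆ {x : ℝ | 1 / 2 ≤ |x| ∧ |x| ≤ 2} ∧
      ∀ x : ℝ,
        ψ₀ x * Real.exp (-x ^ 2) +
          ∑' j : ℕ, ψ ((2 : ℝ) ^ (-((j : ℝ) + 1)) * x) *
            (((2 : ℝ) ^ (-((j : ℝ) + 1)) * x) ^ (2 * m) *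
              Real.exp (-((2 : ℝ) ^ (-((j : ℝ) + 1)) * x) ^ 2)) = 1 := by
  have ω_ne (x : ℝ) (hx : 1 / 2 ≤ ‖x‖) : x ^ (2 * m) * Real.exp (-x ^ 2) ≠ 0 :=
    mul_ne_zero (pow_ne_zero _ (norm_pos_iff.1 (by linarith))) (Real.exp_ne_zero _)
  obtain ⟨ψ₀, ψ, ψ₀_even, ψ_even, ψ₀_supp, ψ_supp, hsum⟩ :=
    exists_schwartz_partition_general (ω₀ := fun x : ℝ ↦ Real.exp (-x ^ 2))
      (ω := fun x ↦ x ^ (2 * m) * Real.exp (-x ^ 2)) (by fun_prop) (by fun_prop)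
      (fun x ↦ by simp) (fun x ↦ by simp [pow_mul]) (fun x _ ↦ Real.exp_ne_zero _)
      fun x hx _ ↦ ω_ne x hx
  exact ⟨ψ₀, ψ, ψ₀_even, ψ_even, ψ₀_supp, ψ_supp, fun x ↦
    add_eq_of_eq_sub' (hsum x).tsum_eq⟩
end
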